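/- The multiplication map induces vector space isomorphisms U_i ⊗ k[f_i] → U_q^-(𝔤) and k[f_i] ⊗ _iU → U_q^-(𝔤), where U_i = U_q^-(𝔤) ∩ T_iU_q^-(𝔤), _iU = U_q^-(𝔤) ∩ T_i^{-1}U_q^-(𝔤), and k[f_i] denotes the subalgebra of U_q^-(𝔤) generated by f_i; equivalently, U_i = Ker r_i and _iU = Ker(_ir) and U_q^-(𝔤) = ⊕_{n≥0} U_i f_i^n = ⊕_{n≥0} f_i^n (_iU). -/

import Mathlib

noncomputable section

open scoped TensorProduct

/-- The field `ℚ(q)` of rational functions. -/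
abbrev KK : Type := RatFunc ℚ

/-- The indeterminate `q ∈ ℚ(q)`. -/
def qq : KK := RatFunc.X

/-- `q^m` for `m ∈ ℤ`. -/
def qpow (m : ℤ) : KK := qq ^ m

/-- The quantum integer `[n]_i = (q_i^n - q_i^{-n})/(q_i - q_i^{-1})` where `q_i = q^d`. -/
def qint (d n : ℤ) : KK := (qpow (d * n) - qpow (-(d * n))) / (qpow d - qpow (-d))

/-- The quantum factorial `[n]_i!`. -/
def qfact (d : ℤ) : ℕ → KK
  | 0 => 1
  | n + 1 => qfact d n * qint d (n + 1)

/-- A symmetrizable generalized Cartan matrix `a` with symmetrizers `d i`, so that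
`(α_i, α_j) = d i * a i j`. -/
structure CartanData (I : Type) : Type where
  a : I → I → ℤ
  d : I → ℤ
  d_pos : ∀ i, 0 < d i
  a_diag : ∀ i, a i i = 2
  a_offdiag : ∀ i j, i ≠ j → a i j ≤ 0
  symm : ∀ i j, d i * a i j = d j * a j i

/-- Generators of the quantum group `U_q(𝔤)` (adjoint form: `t i = q^{(α_i,α_i)/2 · h_i}`). -/
inductive QGen (I : Type) : Type
  | e : I → QGen I
  | f : I → QGen I
  | t : I → QGen I
  | tinv : I → QGen I

variable {I : Type}

/-- The free algebra on the generators of `U_q(𝔤)`. -/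
abbrev FA (I : Type) : Type := FreeAlgebra KK (QGen I)

def ge (i : I) : FA I := FreeAlgebra.ι KK (QGen.e i)
def gf (i : I) : FA I := FreeAlgebra.ι KK (QGen.f i)
def gT (i : I) : FA I := FreeAlgebra.ι KK (QGen.t i)
def gTinv (i : I) : FA I := FreeAlgebra.ι KK (QGen.tinv i)

/-- Divided power `e_i^{(s)}` in the free algebra. -/
def edp (C : CartanData I) (i : I) (s : ℕ) : FA I := (qfact (C.d i) s)⁻¹ • ge i ^ s

/-- Divided power `f_i^{(s)}` in the free algebra. -/
def fdp (C : CartanData I) (i : I) (s : ℕ) : FA I := (qfact (C.d i) s)⁻¹ • gf i ^ s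

/-- The quantum Serre element `Σ_{s} (-1)^s e_i^{(s)} e_j e_i^{(1-a_{ij}-s)}`. -/
def serreE (C : CartanData I) (i j : I) : FA I :=
  ∑ s ∈ Finset.range ((1 - C.a i j).toNat + 1),
    ((-1 : KK) ^ s) • (edp C i s * ge j * edp C i ((1 - C.a i j).toNat - s))

/-- The quantum Serre element `Σ_{s} (-1)^s f_i^{(s)} f_j f_i^{(1-a_{ij}-s)}`. -/
def serreF (C : CartanData I) (i j : I) : FA I :=
  ∑ s ∈ Finset.range ((1 - C.a i j).toNat + 1),
    ((-1 : KK) ^ s) • (fdp C i s * gf j * fdp C i ((1 - C.a i j).toNat - s))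

/-- The defining relations of the quantum group `U_q(𝔤)`. -/
inductive QRel [DecidableEq I] (C : CartanData I) : FA I → FA I → Prop
  | t_tinv (i : I) : QRel C (gT i * gTinv i) 1
  | tinv_t (i : I) : QRel C (gTinv i * gT i) 1
  | t_t (i j : I) : QRel C (gT i * gT j) (gT j * gT i)
  | t_tinv_comm (i j : I) : QRel C (gT i * gTinv j) (gTinv j * gT i)
  | t_e (i j : I) : QRel C (gT i * ge j) (qpow (C.d i * C.a i j) • (ge j * gT i))
  | t_f (i j : I) : QRel C (gT i * gf j) (qpow (-(C.d i * C.a i j)) • (gf j * gT i))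
  | e_f (i j : I) :
      QRel C (ge i * gf j - gf j * ge i)
        (if i = j then (qpow (C.d i) - qpow (-C.d i))⁻¹ • (gT i - gTinv i) else 0)
  | serre_e (i j : I) : i ≠ j → QRel C (serreE C i j) 0
  | serre_f (i j : I) : i ≠ j → QRel C (serreF C i j) 0

/-- The quantum group `U_q(𝔤)`, presented by generators and relations. -/
abbrev Uq [DecidableEq I] (C : CartanData I) : Type := RingQuot (QRel C)

variable [DecidableEq I]

/-- The canonical map from the free algebra onto `U_q(𝔤)`. -/
def uMk (C : CartanData I) : FA I →ₐ[KK] Uq C := RingQuot.mkAlgHom KK (QRel C)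

def uE (C : CartanData I) (i : I) : Uq C := uMk C (ge i)
def uF (C : CartanData I) (i : I) : Uq C := uMk C (gf i)
def uT (C : CartanData I) (i : I) : Uq C := uMk C (gT i)
def uTinv (C : CartanData I) (i : I) : Uq C := uMk C (gTinv i)

/-- Divided power `e_i^{(s)} ∈ U_q(𝔤)`. -/
def uEdp (C : CartanData I) (i : I) (s : ℕ) : Uq C := (qfact (C.d i) s)⁻¹ • uE C i ^ s

/-- Divided power `f_i^{(s)} ∈ U_q(𝔤)`. -/
def uFdp (C : CartanData I) (i : I) (s : ℕ) : Uq C := (qfact (C.d i) s)⁻¹ • uF C i ^ s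

/-- The negative half `U_q^-(𝔤)`, the subalgebra generated by the `f_i`. -/
def Uneg (C : CartanData I) : Subalgebra KK (Uq C) :=
  Algebra.adjoin KK (Set.range (uF C))

/-- The weight `-β` component of `U_q^-(𝔤)` (spanned by monomials in the `f_i` of
content `β ∈ Q_+`). -/
def negWt (C : CartanData I) (β : I →₀ ℕ) : Submodule KK (Uq C) :=
  Submodule.span KK
    {u | ∃ w : List I, (∀ j, w.count j = β j) ∧ u = (w.map (uF C)).prod}

/-- The pairing `(α_i, β) = Σ_j β_j (α_i, α_j)` for `β ∈ Q_+`. -/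
def pairB (C : CartanData I) (i : I) (β : I →₀ ℕ) : ℤ :=
  β.sum fun j m => C.d i * C.a i j * (m : ℤ)

/-- `f_j` as an element of the subalgebra `U_q^-(𝔤)`. -/
def uFneg (C : CartanData I) (j : I) : ↥(Uneg C) :=
  ⟨uF C j, Algebra.subset_adjoin ⟨j, rfl⟩⟩

/-- `t_i^m` for `m ∈ ℤ`. -/
def tpow (C : CartanData I) (i : I) (m : ℤ) : Uq C :=
  if 0 ≤ m then uT C i ^ m.toNat else uTinv C i ^ (-m).toNat


/-- `U_i = U_q^-(𝔤) ∩ T_i(U_q^-(𝔤))`. -/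
def Usub (C : CartanData I) (T : Uq C ≃ₐ[KK] Uq C) : Subalgebra KK (Uq C) :=
  Uneg C ⊓ (Uneg C).map T.toAlgHom

/-- `_iU = U_q^-(𝔤) ∩ T_i⁻¹(U_q^-(𝔤))`. -/
def subU (C : CartanData I) (T : Uq C ≃ₐ[KK] Uq C) : Subalgebra KK (Uq C) :=
  Uneg C ⊓ (Uneg C).map T.symm.toAlgHom

/-- The subalgebra `k[f_i] ⊆ U_q^-(𝔤)` generated by `f_i`. -/
def fSub (C : CartanData I) (i : I) : Subalgebra KK (Uq C) :=
  Algebra.adjoin KK {uF C i}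

/-- The multiplication map `S ⊗ S' → U_q(𝔤)`, `x ⊗ y ↦ xy`. -/
def mulTwo (C : CartanData I) (S S' : Subalgebra KK (Uq C)) :
    ↥S ⊗[KK] ↥S' →ₗ[KK] Uq C :=
  (LinearMap.mul' KK (Uq C)).comp
    (TensorProduct.map S.val.toLinearMap S'.val.toLinearMap)

/-!
The iterated `q`-commutators of `f_i` with the `f_j`, `j ≠ i`, are root vectors of the `α_i`-strings
through the `α_j`. They generate a subalgebra `A` of `U_q^-(𝔤)` with `A k[f_i] = U_q^-(𝔤)`. The
skew derivation `r_i` kills `A` and lowers powers of `f_i`, so these powers are independent over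
`Ker r_i`. Hence `A = Ker r_i` and `A ⊗ k[f_i] ≅ U_q^-(𝔤)`. Passing to the opposite algebra gives
the same for `_ir` and the subalgebra `B` generated by the mirrored commutators.

Since `e_i` lowers each string by one step, `T_i` carries the root vectors in `B` to nonzero
multiples of those in `A`, in reverse order. Thus `T_i B = A`, and as `T_i f_i = -e_i t_i`, applying
`T_i` to `U_q^-(𝔤) = B k[f_i]` gives `T_i U_q^-(𝔤) = A k[e_i t_i]`. The powers of `e_i t_i` are
independent over `U_q^-(𝔤)`, as one sees on a Verma module with highest weight vector `v` such that
`e_i` maps `f_i^{m+1} v` to a nonzero multiple of `f_i^m v`. Therefore `U_i = A`, and applying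
`T_i⁻¹` yields `_iU = B`.
-/

section QCommutator

variable {k B : Type*} [CommRing k] [Ring B] [Algebra k B]

/-- The iterated `q`-commutator `ad_q(f)^m(g)`: `x_0 = g`, `x_{m+1} = f x_m - s Q^m x_m f`.
With `s = q^{-(α_i,α_j)}` and `Q = q^{-(α_i,α_i)}` it is a rescaled root vector of weight
`-(α_j + m α_i)`. -/
def qComm (f g : B) (s Q : k) : ℕ → B
  | 0 => g
  | m + 1 => f * qComm f g s Q m - (s * Q ^ m) • (qComm f g s Q m * f)

/-- The mirror image of `qComm`: `y_0 = g`, `y_{m+1} = y_m f - s Q^m f y_m`. -/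
def qCommRight (f g : B) (s Q : k) (m : ℕ) : B :=
  (qComm (MulOpposite.op f) (MulOpposite.op g) s Q m).unop

lemma map_qComm {B' : Type*} [Ring B'] [Algebra k B'] (φ : B →ₐ[k] B') (f g : B) (s Q : k)
    (m : ℕ) : φ (qComm f g s Q m) = qComm (φ f) (φ g) s Q m := by
  induction m with
  | zero => rfl
  | succ m ih => simp only [qComm, map_sub, map_mul, map_smul, ih]

lemma map_qCommRight {B' : Type*} [Ring B'] [Algebra k B'] (φ : B →ₐ[k] B') (f g : B) (s Q : k)
    (m : ℕ) : φ (qCommRight f g s Q m) = qCommRight (φ f) (φ g) s Q m :=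
  congrArg MulOpposite.unop (map_qComm φ.op (MulOpposite.op f) (MulOpposite.op g) s Q m)

lemma comp_qComm {V W : Type*} [AddCommGroup V] [Module k V] [AddCommGroup W] [Module k W]
    (φ : V →ₗ[k] W) {f g : Module.End k V} {f' g' : Module.End k W} (hf : φ ∘ₗ f = f' ∘ₗ φ)
    (hg : φ ∘ₗ g = g' ∘ₗ φ) (s Q : k) (m : ℕ) :
    φ ∘ₗ qComm f g s Q m = qComm f' g' s Q m ∘ₗ φ := by
  induction m with
  | zero => exact hg
  | succ m ih =>
    simp only [qComm, Module.End.mul_eq_comp, LinearMap.comp_sub, LinearMap.sub_comp,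
      LinearMap.comp_smul, LinearMap.smul_comp, ← LinearMap.comp_assoc, hf, ih]
    simp only [LinearMap.comp_assoc, hf, ih]

lemma qComm_mem {W : ℕ → Submodule k B} {f g : B} (hg : g ∈ W 0)
    (hleft : ∀ m, ∀ x ∈ W m, f * x ∈ W (m + 1)) (hright : ∀ m, ∀ x ∈ W m, x * f ∈ W (m + 1))
    (s Q : k) (m : ℕ) : qComm f g s Q m ∈ W m := by
  induction m with
  | zero => exact hg
  | succ m ih => exact sub_mem (hleft m _ ih) (Submodule.smul_mem _ _ (hright m _ ih))

lemma mul_qComm {f g t : B} {α β : k} (hf : t * f = α • (f * t)) (hg : t * g = β • (g * t))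
    (s Q : k) (m : ℕ) : t * qComm f g s Q m = (β * α ^ m) • (qComm f g s Q m * t) := by
  induction m with
  | zero => simpa [qComm] using hg
  | succ m ih =>
    have hleft : t * (f * qComm f g s Q m) = (β * α ^ (m + 1)) • (f * qComm f g s Q m * t) := by
      rw [← mul_assoc, hf, smul_mul_assoc, mul_assoc, ih, mul_smul_comm, smul_smul, mul_assoc]
      congr 1; ring
    have hright : t * (qComm f g s Q m * f) = (β * α ^ (m + 1)) • (qComm f g s Q m * f * t) := by
      rw [← mul_assoc, ih, smul_mul_assoc, mul_assoc, hf, mul_smul_comm, smul_smul, ← mul_assoc]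
      congr 1; ring
    rw [qComm, mul_sub, mul_smul_comm, hleft, hright, sub_mul, smul_mul_assoc]
    module

lemma commute_qComm {e f g : B} (hf : Commute e f) (hg : Commute e g) (s Q : k) (m : ℕ) :
    Commute e (qComm f g s Q m) := by
  induction m with
  | zero => exact hg
  | succ m ih => exact (hf.mul_right ih).sub_right ((ih.mul_right hf).smul_right _)

lemma qCommutes_inv {t ti x : B} {s : k} (h₁ : t * ti = 1) (h₂ : ti * t = 1)
    (h : t * x = s • (x * t)) : x * ti = s • (ti * x) :=
  calc x * ti = ti * (t * x) * ti := by rw [← mul_assoc, h₂, one_mul]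
    _ = s • (ti * x * (t * ti)) := by simp only [h, mul_smul_comm, smul_mul_assoc, mul_assoc]
    _ = s • (ti * x) := by rw [h₁, mul_one]

lemma lie_qComm_succ_left {e f g t ti : B} {s Q c : k} (h₁ : t * ti = 1) (h₂ : ti * t = 1)
    (hf : t * f = Q • (f * t)) (hg : t * g = s • (g * t)) (hef : e * f - f * e = c • (t - ti))
    (m : ℕ) :
    e * qComm f g s Q (m + 1) - qComm f g s Q (m + 1) * e =
      f * (e * qComm f g s Q m - qComm f g s Q m * e)
        - (s * Q ^ m) • ((e * qComm f g s Q m - qComm f g s Q m * e) * f)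
        - (c * (1 - (s * Q ^ m) ^ 2)) • (ti * qComm f g s Q m) := by
  have ht := mul_qComm hf hg s Q m
  have hti := qCommutes_inv h₁ h₂ ht
  have hef' : e * f = f * e + c • (t - ti) := by rw [← hef]; abel
  rw [qComm]
  generalize s * Q ^ m = σ, qComm f g s Q m = x at *
  have hefx : e * (f * x) = f * (e * x) + c • (σ • (x * t) - ti * x) := by
    rw [← mul_assoc, hef', add_mul, smul_mul_assoc, sub_mul, mul_assoc, ht]
  have hxfe : x * f * e = x * (e * f) - c • (x * t - σ • (ti * x)) := by
    rw [hef', mul_add, mul_smul_comm, mul_sub, mul_assoc, hti]; abel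
  simp only [mul_sub, sub_mul, mul_smul_comm, smul_mul_assoc, hefx, hxfe, mul_assoc]
  module

/-- Up to the invertible `t_i`, `e_i` lowers the root string by one step. -/
lemma lie_qComm_left {e f g t ti : B} {s Q c : k} (h₁ : t * ti = 1) (h₂ : ti * t = 1)
    (hf : t * f = Q • (f * t)) (hg : t * g = s • (g * t)) (hef : e * f - f * e = c • (t - ti))
    (heg : e * g = g * e) (m : ℕ) :
    e * qComm f g s Q (m + 1) - qComm f g s Q (m + 1) * e =
      (-c * (∑ j ∈ Finset.range (m + 1), Q ^ j) * (1 - s ^ 2 * Q ^ m)) •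
        (ti * qComm f g s Q m) := by
  induction m with
  | zero =>
    rw [lie_qComm_succ_left h₁ h₂ hf hg hef 0]
    simp only [qComm, heg, sub_self]
    simp
  | succ m ih =>
    rw [lie_qComm_succ_left h₁ h₂ hf hg hef (m + 1), ih]
    have hcoeff : -c * (∑ j ∈ Finset.range (m + 2), Q ^ j) * (1 - s ^ 2 * Q ^ (m + 1)) =
        Q * (-c * (∑ j ∈ Finset.range (m + 1), Q ^ j) * (1 - s ^ 2 * Q ^ m))
          - c * (1 - (s * Q ^ (m + 1)) ^ 2) := by
      have hgeom : Q * (∑ j ∈ Finset.range (m + 1), Q ^ j) + 1 =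
          (∑ j ∈ Finset.range (m + 1), Q ^ j) + Q ^ (m + 1) := by
        rw [← geom_sum_succ, Finset.sum_range_succ]
      rw [Finset.sum_range_succ _ (m + 1)]
      linear_combination c * hgeom
    rw [hcoeff]
    generalize -c * (∑ j ∈ Finset.range (m + 1), Q ^ j) * (1 - s ^ 2 * Q ^ m) = κ
    have hfx : f * (ti * qComm f g s Q m) = Q • (ti * (f * qComm f g s Q m)) := by
      rw [← mul_assoc, qCommutes_inv h₁ h₂ hf, smul_mul_assoc, mul_assoc]
    rw [mul_smul_comm, hfx, smul_mul_assoc, mul_assoc ti, qComm, mul_sub ti,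
      mul_smul_comm]
    module

lemma lie_qComm_right {e f g t ti : B} {s s' Q c : k} (hs : s * s' = 1)
    (hf : t * f = s • (f * t)) (hfi : ti * f = s' • (f * ti)) (hef : e * f = f * e)
    (heg : e * g - g * e = c • (t - ti)) (m : ℕ) :
    e * qComm f g s Q (m + 1) - qComm f g s Q (m + 1) * e =
      (c * ∏ j ∈ Finset.range (m + 1), (1 - s ^ 2 * Q ^ j)) • (f ^ (m + 1) * t) := by
  have hstep (m : ℕ) : e * qComm f g s Q (m + 1) - qComm f g s Q (m + 1) * e =
      f * (e * qComm f g s Q m - qComm f g s Q m * e)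
        - (s * Q ^ m) • ((e * qComm f g s Q m - qComm f g s Q m * e) * f) := by
    rw [qComm]
    generalize s * Q ^ m = σ, qComm f g s Q m = x
    have hefx : e * (f * x) = f * (e * x) := by rw [← mul_assoc, hef, mul_assoc]
    simp only [mul_sub, sub_mul, mul_smul_comm, smul_mul_assoc, hefx, mul_assoc, hef]
    module
  induction m with
  | zero =>
    rw [hstep 0, qComm, heg]
    simp only [pow_zero, mul_one, smul_mul_assoc, mul_smul_comm, mul_sub, sub_mul, hf, hfi,
      smul_sub, smul_smul, zero_add, pow_one, Finset.prod_range_one]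
    match_scalars
    · ring
    · linear_combination c * hs
  | succ m ih =>
    rw [hstep (m + 1), ih, Finset.prod_range_succ _ (m + 1), mul_smul_comm, smul_mul_assoc,
      mul_assoc _ t, hf, mul_smul_comm, ← mul_assoc, ← mul_assoc, ← pow_succ', ← pow_succ]
    module

/-- The string breaks off when `s² Q^A = 1`, i.e. for `A = -a_{ij}`. -/
lemma commute_qComm_of_commute_right {e f g t ti : B} {s Q c : k} {A : ℕ} (h₁ : t * ti = 1)
    (h₂ : ti * t = 1) (hf : t * f = Q • (f * t)) (hg : t * g = s • (g * t))
    (hef : e * f - f * e = c • (t - ti)) (heg : e * g = g * e) (hA : s ^ 2 * Q ^ A = 1) :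
    Commute e (qComm f g s Q (A + 1)) := by
  rw [commute_iff_eq, ← sub_eq_zero, lie_qComm_left h₁ h₂ hf hg hef heg, hA]
  simp

lemma commute_qComm_of_commute_left {e f g t ti : B} {s s' Q c : k} {A : ℕ} (hs : s * s' = 1)
    (hf : t * f = s • (f * t)) (hfi : ti * f = s' • (f * ti)) (hef : e * f = f * e)
    (heg : e * g - g * e = c • (t - ti)) (hA : s ^ 2 * Q ^ A = 1) :
    Commute e (qComm f g s Q (A + 1)) := by
  rw [commute_iff_eq, ← sub_eq_zero, lie_qComm_right hs hf hfi hef heg, Finset.prod_range_succ, hA]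
  simp

end QCommutator

section QuantumIntegers

lemma qq_ne_zero : qq ≠ 0 := RatFunc.X_ne_zero

lemma qpow_add (a b : ℤ) : qpow (a + b) = qpow a * qpow b := zpow_add₀ qq_ne_zero a b

lemma qpow_zero : qpow 0 = 1 := zpow_zero _

lemma qpow_ne_zero (a : ℤ) : qpow a ≠ 0 := zpow_ne_zero _ qq_ne_zero

lemma qpow_mul_natCast (a : ℤ) (n : ℕ) : qpow (a * n) = qpow a ^ n := by
  rw [qpow, qpow, zpow_mul, zpow_natCast]

lemma qpow_mul_qpow_neg (a : ℤ) : qpow a * qpow (-a) = 1 := by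
  rw [← qpow_add, add_neg_cancel, qpow_zero]

lemma qpow_neg_mul_qpow (a : ℤ) : qpow (-a) * qpow a = 1 := by
  rw [mul_comm, qpow_mul_qpow_neg]

lemma intDegree_qpow (m : ℤ) : (qpow m).intDegree = m := by
  induction m using Int.induction_on with
  | zero => rw [qpow_zero, RatFunc.intDegree_one]
  | succ n ih =>
    rw [qpow_add, RatFunc.intDegree_mul (qpow_ne_zero _) (qpow_ne_zero _), ih]
    simp [qpow, qq]
  | pred n ih =>
    rw [sub_eq_add_neg, qpow_add, RatFunc.intDegree_mul (qpow_ne_zero _) (qpow_ne_zero _), ih]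
    simp [qpow, qq]

lemma qpow_injective : Function.Injective qpow :=
  Function.LeftInverse.injective intDegree_qpow

lemma qpow_sub_qpow_ne_zero {a b : ℤ} (h : a ≠ b) : qpow a - qpow b ≠ 0 :=
  sub_ne_zero.mpr (qpow_injective.ne h)

lemma one_sub_qpow_ne_zero {a : ℤ} (h : a ≠ 0) : 1 - qpow a ≠ 0 := by
  simpa only [qpow_zero] using qpow_sub_qpow_ne_zero h.symm

lemma geom_sum_qpow_ne_zero {a : ℤ} (ha : a ≠ 0) (n : ℕ) :
    ∑ j ∈ Finset.range (n + 1), qpow a ^ j ≠ 0 := by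
  intro h
  have hpow : qpow a ^ (n + 1) = 1 := by
    rw [← sub_eq_zero, ← geom_sum_mul, h, zero_mul]
  rw [← qpow_mul_natCast, ← qpow_zero] at hpow
  exact mul_ne_zero ha (by positivity) (qpow_injective hpow)

lemma qint_ne_zero {d n : ℤ} (hd : 0 < d) (hn : 0 < n) : qint d n ≠ 0 := by
  have := mul_pos hd hn
  exact div_ne_zero (qpow_sub_qpow_ne_zero (by lia)) (qpow_sub_qpow_ne_zero (by lia))

lemma qfact_ne_zero {d : ℤ} (hd : 0 < d) (n : ℕ) : qfact d n ≠ 0 := by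
  induction n with
  | zero => exact one_ne_zero
  | succ n ih => exact mul_ne_zero ih (qint_ne_zero hd (by positivity))

lemma qint_zero (d : ℤ) : qint d 0 = 0 := by simp [qint]

lemma qint_add (d m n : ℤ) :
    qint d (m + n) = qint d m * qpow (d * n) + qint d n * qpow (-(d * m)) := by
  simp only [qint, mul_add, neg_add, qpow_add]
  ring

end QuantumIntegers

section DividedPowers

open Finset.HasAntidiagonal (antidiagonal mem_antidiagonal)

variable {B : Type*} [Ring B] [Algebra KK B] {d : ℤ}

/-- The divided power `f^{(n)} = f^n / [n]!` in an arbitrary `ℚ(q)`-algebra. -/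
def divPow (d : ℤ) (f : B) (n : ℕ) : B := (qfact d n)⁻¹ • f ^ n

lemma divPow_zero (d : ℤ) (f : B) : divPow d f 0 = 1 := by simp [divPow, qfact]

lemma mul_divPow (hd : 0 < d) (f : B) (n : ℕ) :
    f * divPow d f n = qint d (n + 1 : ℕ) • divPow d f (n + 1) := by
  have := qint_ne_zero hd (n := (n : ℤ) + 1) (by positivity)
  rw [divPow, divPow, mul_smul_comm, ← pow_succ', smul_smul, qfact, Nat.cast_succ]
  congr 1
  field_simp

lemma divPow_mul (hd : 0 < d) (f : B) (n : ℕ) :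
    divPow d f n * f = qint d (n + 1 : ℕ) • divPow d f (n + 1) := by
  rw [← mul_divPow hd, divPow, mul_smul_comm, smul_mul_assoc, ← pow_succ, ← pow_succ']

lemma qint_mul_qpow_pascal (d p m : ℤ) {a b : ℕ} (hab : (a + b : ℤ) = m + 1) :
    qint d (m + 1) * qpow (-(b * (p + d * m))) =
      qint d a * qpow (-(b * (p + d * (m - 1))))
        + qint d b * qpow (-(b * (p + d * (m - 1))) - d * (m + 1)) := by
  have hleft : qpow (-(b * (p + d * (m - 1)))) = qpow (d * b) * qpow (-(b * (p + d * m))) := by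
    rw [← qpow_add]; ring_nf
  have hright : qpow (-(b * (p + d * (m - 1))) - d * (m + 1)) =
      qpow (-(d * a)) * qpow (-(b * (p + d * m))) := by
    rw [← qpow_add, ← hab]; ring_nf
  rw [hright, hleft, ← hab, qint_add]
  ring

lemma qComm_eq_sum_divPow (hd : 0 < d) (f g : B) (p : ℤ) (m : ℕ) :
    qComm f g (qpow (-p)) (qpow (-(2 * d))) m =
      qfact d m • ∑ z ∈ antidiagonal m,
        ((-1) ^ z.2 * qpow (-(z.2 * (p + d * (m - 1))))) •
          (divPow d f z.1 * g * divPow d f z.2) := by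
  induction m with
  | zero => simp [qComm, divPow_zero, qfact, qpow_zero]
  | succ m ih =>
    have hpascal : qint d (m + 1) • ∑ z ∈ antidiagonal (m + 1),
          ((-1) ^ z.2 * qpow (-(z.2 * (p + d * m)))) • (divPow d f z.1 * g * divPow d f z.2) =
        (∑ z ∈ antidiagonal (m + 1), (qint d z.1 * ((-1) ^ z.2 *
          qpow (-(z.2 * (p + d * (m - 1)))))) • (divPow d f z.1 * g * divPow d f z.2))
        + ∑ z ∈ antidiagonal (m + 1), (qint d z.2 * ((-1) ^ z.2 *
          qpow (-(z.2 * (p + d * (m - 1))) - d * (m + 1)))) •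
            (divPow d f z.1 * g * divPow d f z.2) := by
      rw [Finset.smul_sum, ← Finset.sum_add_distrib]
      refine Finset.sum_congr rfl fun z hz => ?_
      rw [smul_smul, ← add_smul]
      congr 1
      linear_combination (-1) ^ z.2 * qint_mul_qpow_pascal d p m
        (mod_cast mem_antidiagonal.mp hz : (z.1 + z.2 : ℤ) = m + 1)
    have hexp : qpow (-p) * qpow (-(2 * d)) ^ m = qpow (-p - 2 * d * m) := by
      rw [← qpow_mul_natCast, ← qpow_add]; ring_nf
    push_cast
    rw [add_sub_cancel_right, qfact, mul_smul, hpascal, Finset.Nat.sum_antidiagonal_succ,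
      Finset.Nat.sum_antidiagonal_succ', qComm, ih, hexp]
    simp only [Nat.cast_zero, qint_zero, zero_mul, zero_smul, zero_add]
    rw [mul_smul_comm, smul_mul_assoc, smul_comm (qpow _) (qfact d m), ← smul_sub, Finset.mul_sum,
      Finset.sum_mul, Finset.smul_sum, sub_eq_add_neg, ← Finset.sum_neg_distrib]
    congr 2 <;> refine Finset.sum_congr rfl fun z _ => ?_
    · rw [mul_smul_comm, ← mul_assoc, ← mul_assoc, mul_divPow hd, smul_mul_assoc, smul_mul_assoc,
        smul_smul, mul_comm]
    · have hexp' : qpow (-((z.2 + 1 : ℕ) * (p + d * (m - 1))) - d * (m + 1)) =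
          qpow (-p - 2 * d * m) * qpow (-(z.2 * (p + d * (m - 1)))) := by
        rw [← qpow_add]; push_cast; ring_nf
      rw [smul_mul_assoc, mul_assoc (_ * _) _ f, divPow_mul hd, mul_smul_comm, smul_smul,
        smul_smul, ← neg_smul, hexp', pow_succ]
      ring_nf

lemma sum_divPow_eq_qComm_top (hd : 0 < d) (A : ℕ) (f g : B) :
    ∑ r ∈ Finset.range (A + 1), ((-1 : KK) ^ r * qpow (d * r)) •
        (divPow d f (A - r) * g * divPow d f r) =
      (qfact d A)⁻¹ • qComm f g (qpow (d * A)) (qpow (-(2 * d))) A := by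
  have h := qComm_eq_sum_divPow hd f g (-(d * A)) A
  rw [neg_neg] at h
  rw [h, inv_smul_smul₀ (qfact_ne_zero hd _), ← Finset.Nat.sum_antidiagonal_swap,
    Finset.Nat.sum_antidiagonal_eq_sum_range_succ_mk]
  refine Finset.sum_congr rfl fun r _ => ?_
  simp only [Prod.swap]
  congr 3
  ring

lemma sum_divPow_eq_qComm_serre (hd : 0 < d) (A : ℕ) (f g : B) :
    ∑ r ∈ Finset.range (A + 1 + 1), ((-1 : KK) ^ r) • (divPow d f r * g * divPow d f (A + 1 - r)) =
      ((-1 : KK) ^ (A + 1) * (qfact d (A + 1))⁻¹) •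
        qComm f g (qpow (d * A)) (qpow (-(2 * d))) (A + 1) := by
  have h := qComm_eq_sum_divPow hd f g (-(d * A)) (A + 1)
  rw [neg_neg] at h
  rw [h, mul_smul, inv_smul_smul₀ (qfact_ne_zero hd _),
    Finset.Nat.sum_antidiagonal_eq_sum_range_succ_mk, Finset.smul_sum]
  refine Finset.sum_congr rfl fun r hr => ?_
  have hr' : r ≤ A + 1 := Nat.lt_succ_iff.mp (Finset.mem_range.mp hr)
  have hexp : -(d * A) + d * ((A + 1 : ℕ) - 1) = 0 := by push_cast; ring
  have hsign : (-1 : KK) ^ (A + 1) = (-1) ^ (A + 1 - r) * (-1) ^ r := by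
    rw [← pow_add, Nat.sub_add_cancel hr']
  rw [hexp, mul_zero, neg_zero, qpow_zero, mul_one, smul_smul, hsign, mul_right_comm, ← pow_add,
    Even.neg_one_pow ⟨_, rfl⟩, one_mul]

end DividedPowers

section RootVectors

variable {ι : Type} (C : CartanData ι) {B B' : Type*} [Ring B] [Algebra KK B] [Ring B']
  [Algebra KK B']

namespace CartanData

/-- The length `-a_{ij}` of the `α_i`-string through `α_j`. -/
def stringLength (i j : ι) : ℕ := (-C.a i j).toNat

variable {C}

lemma coe_stringLength {i j : ι} (h : i ≠ j) : (C.stringLength i j : ℤ) = -C.a i j :=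
  Int.toNat_of_nonneg (neg_nonneg.mpr (C.a_offdiag i j h))

lemma toNat_one_sub_a {i j : ι} (h : i ≠ j) : (1 - C.a i j).toNat = C.stringLength i j + 1 := by
  have := coe_stringLength (C := C) h
  lia

lemma neg_d_mul_a {i j : ι} (h : i ≠ j) : -(C.d i * C.a i j) = C.d i * C.stringLength i j := by
  rw [coe_stringLength h, mul_neg]

lemma qpow_string_end {i j : ι} (h : i ≠ j) :
    qpow (-(C.d i * C.a i j)) ^ 2 * qpow (-(2 * C.d i)) ^ C.stringLength i j = 1 := by
  rw [← qpow_mul_natCast, ← qpow_mul_natCast, ← qpow_add, neg_d_mul_a h, ← qpow_zero]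
  congr 1
  push_cast
  ring

end CartanData

/-- The root vector of weight `-(α_j + m α_i)` built from a family `F` by iterated left
`q`-commutators with `F i`. -/
def rootVec (F : ι → B) (i j : ι) (m : ℕ) : B :=
  qComm (F i) (F j) (qpow (-(C.d i * C.a i j))) (qpow (-(2 * C.d i))) m

/-- The mirror image of `rootVec`, built by iterated right `q`-commutators. -/
def rootVecRight (F : ι → B) (i j : ι) (m : ℕ) : B :=
  qCommRight (F i) (F j) (qpow (-(C.d i * C.a i j))) (qpow (-(2 * C.d i))) m

/-- The scalar `q^{-(α_i, α_j + m α_i)}` in the recursion for `rootVec`. -/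
def rootScalar (i j : ι) (m : ℕ) : KK := qpow (-(C.d i * C.a i j)) * qpow (-(2 * C.d i)) ^ m

lemma rootVec_succ (F : ι → B) (i j : ι) (m : ℕ) :
    rootVec C F i j (m + 1) =
      F i * rootVec C F i j m - rootScalar C i j m • (rootVec C F i j m * F i) :=
  rfl

lemma rootVecRight_succ (F : ι → B) (i j : ι) (m : ℕ) :
    rootVecRight C F i j (m + 1) =
      rootVecRight C F i j m * F i - rootScalar C i j m • (F i * rootVecRight C F i j m) :=
  rfl

lemma rootScalar_eq_qpow (i j : ι) (m : ℕ) :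
    rootScalar C i j m = qpow (-(C.d i * C.a i j) - 2 * C.d i * m) := by
  rw [rootScalar, ← qpow_mul_natCast, ← qpow_add]
  ring_nf

lemma map_rootVec (φ : B →ₐ[KK] B') (F : ι → B) (i j : ι) (m : ℕ) :
    φ (rootVec C F i j m) = rootVec C (φ ∘ F) i j m :=
  map_qComm φ _ _ _ _ m

lemma map_rootVecRight (φ : B →ₐ[KK] B') (F : ι → B) (i j : ι) (m : ℕ) :
    φ (rootVecRight C F i j m) = rootVecRight C (φ ∘ F) i j m :=
  map_qCommRight φ _ _ _ _ m

lemma comp_rootVec {V W : Type*} [AddCommGroup V] [Module KK V] [AddCommGroup W] [Module KK W]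
    {φ : V →ₗ[KK] W} {F : ι → Module.End KK V} {F' : ι → Module.End KK W}
    (h : ∀ k, φ ∘ₗ F k = F' k ∘ₗ φ) (i j : ι) (m : ℕ) :
    φ ∘ₗ rootVec C F i j m = rootVec C F' i j m ∘ₗ φ :=
  comp_qComm φ (h i) (h j) _ _ m

variable {C}

lemma sum_divPow_eq_smul_rootVec {i j : ι} (hij : i ≠ j) (F : ι → B) :
    ∃ c : KK, c ≠ 0 ∧ ∑ r ∈ Finset.range ((1 - C.a i j).toNat + 1), ((-1 : KK) ^ r) •
        (divPow (C.d i) (F i) r * F j * divPow (C.d i) (F i) ((1 - C.a i j).toNat - r)) =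
      c • rootVec C F i j (C.stringLength i j + 1) := by
  have hfact := qfact_ne_zero (C.d_pos i) (C.stringLength i j + 1)
  refine ⟨(-1) ^ (C.stringLength i j + 1) * (qfact (C.d i) (C.stringLength i j + 1))⁻¹,
    mul_ne_zero (pow_ne_zero _ (neg_ne_zero.mpr one_ne_zero)) (inv_ne_zero hfact), ?_⟩
  rw [CartanData.toNat_one_sub_a hij, sum_divPow_eq_qComm_serre (C.d_pos i), rootVec,
    CartanData.neg_d_mul_a hij]

lemma map_serreF_eq_zero_iff {i j : ι} (hij : i ≠ j) (φ : FA ι →ₐ[KK] B) :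
    φ (serreF C i j) = 0 ↔ rootVec C (φ ∘ gf) i j (C.stringLength i j + 1) = 0 := by
  obtain ⟨c, hc, hsum⟩ := sum_divPow_eq_smul_rootVec (C := C) hij (φ ∘ gf)
  rw [← smul_eq_zero_iff_right (m := rootVec C _ i j _) hc, ← hsum]
  simp only [serreF, fdp, divPow, map_sum, map_smul, map_mul, map_pow, Function.comp_apply]

lemma map_serreE_eq_zero_iff {i j : ι} (hij : i ≠ j) (φ : FA ι →ₐ[KK] B) :
    φ (serreE C i j) = 0 ↔ rootVec C (φ ∘ ge) i j (C.stringLength i j + 1) = 0 := by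
  obtain ⟨c, hc, hsum⟩ := sum_divPow_eq_smul_rootVec (C := C) hij (φ ∘ ge)
  rw [← smul_eq_zero_iff_right (m := rootVec C _ i j _) hc, ← hsum]
  simp only [serreE, edp, divPow, map_sum, map_smul, map_mul, map_pow, Function.comp_apply]

end RootVectors

section Relations

variable {B : Type*} [Ring B] [Algebra KK B]

/-- Families in a `ℚ(q)`-algebra satisfying the defining relations of `U_q(𝔤)` apart from the
quantum Serre relations and the commutativity of the `t_i`. -/
structure QuantumRels (C : CartanData I) (E F T Ti : I → B) : Prop where
  t_mul_ti : ∀ i, T i * Ti i = 1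
  ti_mul_t : ∀ i, Ti i * T i = 1
  t_mul_e : ∀ i j, T i * E j = qpow (C.d i * C.a i j) • (E j * T i)
  t_mul_f : ∀ i j, T i * F j = qpow (-(C.d i * C.a i j)) • (F j * T i)
  e_mul_f : ∀ i j, E i * F j - F j * E i =
    if i = j then (qpow (C.d i) - qpow (-C.d i))⁻¹ • (T i - Ti i) else 0

namespace QuantumRels

variable {C : CartanData I} {E F T Ti : I → B}

lemma inv_mul_of_qCommutes {t ti x : B} {m : ℤ} (h₁ : t * ti = 1) (h₂ : ti * t = 1)
    (h : t * x = qpow m • (x * t)) : ti * x = qpow (-m) • (x * ti) := by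
  rw [qCommutes_inv h₁ h₂ h, smul_smul, qpow_neg_mul_qpow, one_smul]

lemma ti_mul_e (h : QuantumRels C E F T Ti) (i j : I) :
    Ti i * E j = qpow (-(C.d i * C.a i j)) • (E j * Ti i) :=
  inv_mul_of_qCommutes (h.t_mul_ti i) (h.ti_mul_t i) (h.t_mul_e i j)

lemma ti_mul_f (h : QuantumRels C E F T Ti) (i j : I) :
    Ti i * F j = qpow (C.d i * C.a i j) • (F j * Ti i) := by
  simpa only [neg_neg] using
    inv_mul_of_qCommutes (h.t_mul_ti i) (h.ti_mul_t i) (h.t_mul_f i j)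

lemma t_mul_f_self (h : QuantumRels C E F T Ti) (i : I) :
    T i * F i = qpow (-(2 * C.d i)) • (F i * T i) := by
  rw [h.t_mul_f, C.a_diag, mul_comm 2]

lemma e_mul_f_self (h : QuantumRels C E F T Ti) (i : I) :
    E i * F i - F i * E i = (qpow (C.d i) - qpow (-C.d i))⁻¹ • (T i - Ti i) := by
  rw [h.e_mul_f, if_pos rfl]

lemma e_mul_f_of_ne (h : QuantumRels C E F T Ti) {i j : I} (hij : i ≠ j) :
    E i * F j = F j * E i := by
  rw [← sub_eq_zero, h.e_mul_f, if_neg hij]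

/-- The Chevalley involution. -/
lemma swap (h : QuantumRels C E F T Ti) : QuantumRels C F E Ti T where
  t_mul_ti := h.ti_mul_t
  ti_mul_t := h.t_mul_ti
  t_mul_e := h.ti_mul_f
  t_mul_f := h.ti_mul_e
  e_mul_f i j := by
    rw [← neg_sub, h.e_mul_f j i]
    obtain rfl | hij := eq_or_ne i j
    · rw [if_pos rfl, if_pos rfl, ← smul_neg, neg_sub]
    · rw [if_neg hij, if_neg hij.symm, neg_zero]

lemma t_mul_rootVec (h : QuantumRels C E F T Ti) (i j : I) (m : ℕ) :
    T i * rootVec C F i j m = rootScalar C i j m • (rootVec C F i j m * T i) :=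
  mul_qComm (h.t_mul_f_self i) (h.t_mul_f i j) _ _ m

lemma lie_rootVec (h : QuantumRels C E F T Ti) {i j : I} (hij : i ≠ j) (m : ℕ) :
    E i * rootVec C F i j (m + 1) - rootVec C F i j (m + 1) * E i =
      (-(qpow (C.d i) - qpow (-C.d i))⁻¹ *
          (∑ l ∈ Finset.range (m + 1), qpow (-(2 * C.d i)) ^ l) *
          (1 - qpow (-(C.d i * C.a i j)) ^ 2 * qpow (-(2 * C.d i)) ^ m)) •
        (Ti i * rootVec C F i j m) :=
  lie_qComm_left (h.t_mul_ti i) (h.ti_mul_t i) (h.t_mul_f_self i) (h.t_mul_f i j)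
    (h.e_mul_f_self i) (h.e_mul_f_of_ne hij) m

lemma commute_rootVec_serre (h : QuantumRels C E F T Ti) {i j : I} (hij : i ≠ j) (k : I) :
    Commute (E k) (rootVec C F i j (C.stringLength i j + 1)) := by
  obtain rfl | hki := eq_or_ne k i
  · exact commute_qComm_of_commute_right (h.t_mul_ti k) (h.ti_mul_t k) (h.t_mul_f_self k)
      (h.t_mul_f k j) (h.e_mul_f_self k) (h.e_mul_f_of_ne hij) (CartanData.qpow_string_end hij)
  obtain rfl | hkj := eq_or_ne k j
  · refine commute_qComm_of_commute_left (t := T k) (ti := Ti k) (qpow_neg_mul_qpow _) ?_ ?_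
      (h.e_mul_f_of_ne hki) (h.e_mul_f_self k) (CartanData.qpow_string_end hij)
    · rw [h.t_mul_f, C.symm i k]
    · rw [h.ti_mul_f, C.symm i k]
  · exact commute_qComm (h.e_mul_f_of_ne hki) (h.e_mul_f_of_ne hkj) _ _ _

end QuantumRels

end Relations

section WordModule

variable {ι : Type}

/-- The vector space on words in `ι`, on which the free algebra on the `f_i` acts freely. -/
abbrev WordModule (ι : Type) : Type := List ι →₀ KK

namespace WordModule

variable (C : CartanData ι)

/-- `(α_i, wt w)` for the weight `wt w = Σ α_k` over the letters `k` of `w`. -/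
def wordPairing (i : ι) (w : List ι) : ℤ := (w.map fun k => C.d i * C.a i k).sum

lemma wordPairing_cons (i k : ι) (w : List ι) :
    wordPairing C i (k :: w) = C.d i * C.a i k + wordPairing C i w :=
  List.sum_cons

lemma wordPairing_replicate (i : ι) (m : ℕ) :
    wordPairing C i (List.replicate m i) = 2 * C.d i * m := by
  simp only [wordPairing, C.a_diag, List.map_replicate, List.sum_replicate, nsmul_eq_mul]
  ring

/-- `f_k` prepends the letter `k`. -/
def opF (k : ι) : Module.End KK (WordModule ι) := Finsupp.lmapDomain KK KK (List.cons k)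

/-- `t_i` acts diagonally; its eigenvalue on the empty word is `q⁻¹`. -/
def opT (i : ι) : Module.End KK (WordModule ι) :=
  Finsupp.lsum KK fun w => qpow (-1 - wordPairing C i w) • Finsupp.lsingle w

/-- `t_i⁻¹`, acting diagonally. -/
def opTinv (i : ι) : Module.End KK (WordModule ι) :=
  Finsupp.lsum KK fun w => qpow (1 + wordPairing C i w) • Finsupp.lsingle w

lemma opF_single (k : ι) (w : List ι) (c : KK) :
    opF k (Finsupp.single w c) = Finsupp.single (k :: w) c :=
  Finsupp.mapDomain_single

lemma opT_single (i : ι) (w : List ι) (c : KK) :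
    opT C i (Finsupp.single w c) = qpow (-1 - wordPairing C i w) • Finsupp.single w c := by
  simp [opT]

lemma opTinv_single (i : ι) (w : List ι) (c : KK) :
    opTinv C i (Finsupp.single w c) = qpow (1 + wordPairing C i w) • Finsupp.single w c := by
  simp [opTinv]

lemma opT_mul_opF (i j : ι) :
    opT C i * opF j = qpow (-(C.d i * C.a i j)) • (opF j * opT C i) := by
  refine Finsupp.lhom_ext fun w c => ?_
  simp only [Module.End.mul_apply, LinearMap.smul_apply, opF_single, opT_single, map_smul,
    wordPairing_cons, smul_smul, ← qpow_add]
  ring_nf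

lemma opT_comm (i j : ι) : opT C i * opT C j = opT C j * opT C i := by
  refine Finsupp.lhom_ext fun w c => ?_
  simp only [Module.End.mul_apply, opT_single, map_smul, smul_comm (qpow (-1 - wordPairing C i w))]

lemma opT_opTinv_comm (i j : ι) : opT C i * opTinv C j = opTinv C j * opT C i := by
  refine Finsupp.lhom_ext fun w c => ?_
  simp only [Module.End.mul_apply, opT_single, opTinv_single, map_smul,
    smul_comm (qpow (-1 - wordPairing C i w))]

/-- The operator by which the quantum Serre element attached to `(i, j)` acts on words. -/
def serreOp (i j : ι) : Module.End KK (WordModule ι) :=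
  rootVec C opF i j (C.stringLength i j + 1)

/-- The kernel of the quotient map from words to the Verma module: the smallest subspace that
contains the images of the Serre operators and is stable under the `f_k`. -/
def serreSubmodule : Submodule KK (WordModule ι) :=
  sInf {W | (∀ i j, i ≠ j → ∀ x, serreOp C i j x ∈ W) ∧ ∀ k, ∀ y ∈ W, opF k y ∈ W}

lemma serreOp_mem {i j : ι} (hij : i ≠ j) (x : WordModule ι) :
    serreOp C i j x ∈ serreSubmodule C :=
  Submodule.mem_sInf.mpr fun _ hW => hW.1 i j hij x

lemma opF_mem (k : ι) {y : WordModule ι} (hy : y ∈ serreSubmodule C) :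
    opF k y ∈ serreSubmodule C :=
  Submodule.mem_sInf.mpr fun W hW => hW.2 k y (Submodule.mem_sInf.mp hy W hW)

lemma serreSubmodule_le_comap {P : Module.End KK (WordModule ι)}
    (hserre : ∀ i j, i ≠ j → ∀ x, P (serreOp C i j x) ∈ serreSubmodule C)
    (hF : ∀ k, ∀ y ∈ serreSubmodule C, P y ∈ serreSubmodule C → P (opF k y) ∈ serreSubmodule C) :
    serreSubmodule C ≤ (serreSubmodule C).comap P :=
  have h : serreSubmodule C ≤ serreSubmodule C ⊓ (serreSubmodule C).comap P :=
    sInf_le ⟨fun i j hij x => ⟨serreOp_mem C hij x, hserre i j hij x⟩,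
      fun k y hy => ⟨opF_mem C k hy.1, hF k y hy.1 hy.2⟩⟩
  h.trans inf_le_right

lemma serreSubmodule_le_comap_of_qCommutes {P : Module.End KK (WordModule ι)} {c : ι → KK}
    (hP : ∀ k, P * opF k = c k • (opF k * P)) :
    serreSubmodule C ≤ (serreSubmodule C).comap P := by
  refine serreSubmodule_le_comap C (fun i j hij x => ?_) fun k y _ hy => ?_
  · rw [← Module.End.mul_apply, serreOp, rootVec, mul_qComm (hP i) (hP j)]
    exact Submodule.smul_mem _ _ (serreOp_mem C hij _)
  · rw [← Module.End.mul_apply, hP]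
    exact Submodule.smul_mem _ _ (opF_mem C k hy)

end WordModule

end WordModule

section VermaModule

namespace WordModule

variable (C : CartanData I)

/-- The action of `e_i` on a word, forced by `e_i ∅ = 0` and
`e_i f_k - f_k e_i = δ_{ik} (t_i - t_i⁻¹) / (q_i - q_i⁻¹)`. -/
def lower (i : I) : List I → WordModule I
  | [] => 0
  | k :: w => opF k (lower i w) + if i = k then
      ((qpow (C.d i) - qpow (-C.d i))⁻¹ *
        (qpow (-1 - wordPairing C i w) - qpow (1 + wordPairing C i w))) •
          Finsupp.single w 1 else 0

/-- The operator `e_i`, the linear extension of `lower`. -/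
def opE (i : I) : Module.End KK (WordModule I) := Finsupp.linearCombination KK (lower C i)

lemma opE_single (i : I) (w : List I) (c : KK) :
    opE C i (Finsupp.single w c) = c • lower C i w :=
  Finsupp.linearCombination_single _ _ _

lemma opT_lower (i j : I) (w : List I) :
    opT C i (lower C j w) =
      qpow (C.d i * C.a i j + (-1 - wordPairing C i w)) • lower C j w := by
  induction w with
  | nil => simp [lower]
  | cons k w ih =>
    have hTF : opT C i (opF k (lower C j w)) =
        qpow (-(C.d i * C.a i k)) • opF k (opT C i (lower C j w)) :=
      LinearMap.congr_fun (opT_mul_opF C i k) (lower C j w)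
    rw [lower, map_add, hTF, ih, map_smul, smul_smul, smul_add, wordPairing_cons, ← qpow_add]
    congr 1
    · ring_nf
    · split_ifs with h
      · subst h
        rw [map_smul, opT_single, smul_comm]
        ring_nf
      · rw [map_zero, smul_zero]

lemma quantumRels : QuantumRels C (opE C) opF (opT C) (opTinv C) where
  t_mul_ti i := by
    refine Finsupp.lhom_ext fun w c => ?_
    rw [Module.End.mul_apply, opTinv_single, map_smul, opT_single, smul_smul, ← qpow_add,
      add_add_sub_cancel, add_neg_cancel, qpow_zero, one_smul, Module.End.one_apply]
  ti_mul_t i := by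
    refine Finsupp.lhom_ext fun w c => ?_
    rw [Module.End.mul_apply, opT_single, map_smul, opTinv_single, smul_smul, ← qpow_add,
      sub_add_add_cancel, neg_add_cancel, qpow_zero, one_smul, Module.End.one_apply]
  t_mul_e i j := by
    refine Finsupp.lhom_ext fun w c => ?_
    simp only [Module.End.mul_apply, LinearMap.smul_apply, opT_single, opE_single, map_smul,
      opT_lower, smul_smul, qpow_add]
    ring_nf
  t_mul_f := opT_mul_opF C
  e_mul_f i j := by
    refine Finsupp.lhom_ext fun w c => ?_
    simp only [Module.End.mul_apply, LinearMap.sub_apply, opF_single, opE_single, map_smul, lower,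
      smul_add, add_sub_cancel_left]
    split_ifs
    · rw [LinearMap.smul_apply, LinearMap.sub_apply, opT_single, opTinv_single, ← sub_smul,
        smul_smul, ← mul_one c, ← smul_eq_mul c, ← Finsupp.smul_single, smul_eq_mul, mul_one,
        smul_smul, smul_smul, mul_comm]
    · rw [smul_zero, LinearMap.zero_apply]

lemma rootVec_opE_serre {i j : I} (hij : i ≠ j) :
    rootVec C (opE C) i j (C.stringLength i j + 1) = 0 := by
  have hnil (m : ℕ) : rootVec C (opE C) i j m (Finsupp.single [] 1) = 0 := by
    induction m with
    | zero => exact (opE_single C j [] 1).trans (smul_zero _)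
    | succ m ih =>
      rw [rootVec_succ, LinearMap.sub_apply, LinearMap.smul_apply, Module.End.mul_apply,
        Module.End.mul_apply, ih, opE_single, lower, smul_zero, map_zero, map_zero, smul_zero,
        sub_zero]
  refine Finsupp.lhom_ext' fun w => LinearMap.ext_ring ?_
  rw [LinearMap.comp_apply, Finsupp.lsingle_apply, LinearMap.zero_comp, LinearMap.zero_apply]
  induction w with
  | nil => exact hnil _
  | cons k w ih =>
    have hcomm := (quantumRels C).swap.commute_rootVec_serre hij k
    rw [← opF_single, ← Module.End.mul_apply, ← hcomm.eq, Module.End.mul_apply, ih, map_zero]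

lemma serreSubmodule_le_comap_opE (k : I) :
    serreSubmodule C ≤ (serreSubmodule C).comap (opE C k) := by
  refine serreSubmodule_le_comap C (fun i j hij x => ?_) fun l y hyN hy => ?_
  · rw [← Module.End.mul_apply, serreOp, ((quantumRels C).commute_rootVec_serre hij k).eq]
    exact serreOp_mem C hij _
  · have hT := serreSubmodule_le_comap_of_qCommutes C (opT_mul_opF C k) hyN
    have hTinv := serreSubmodule_le_comap_of_qCommutes C ((quantumRels C).ti_mul_f k) hyN
    rw [← Module.End.mul_apply, sub_eq_iff_eq_add.mp ((quantumRels C).e_mul_f k l),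
      LinearMap.add_apply]
    refine add_mem ?_ (opF_mem C l hy)
    split_ifs
    · exact Submodule.smul_mem _ _ (sub_mem hT hTinv)
    · exact zero_mem _

/-- The operators by which the generators of `U_q(𝔤)` act on words. -/
def genOp : QGen I → Module.End KK (WordModule I)
  | QGen.e i => opE C i
  | QGen.f i => opF i
  | QGen.t i => opT C i
  | QGen.tinv i => opTinv C i

lemma serreSubmodule_le_comap_genOp (g : QGen I) :
    serreSubmodule C ≤ (serreSubmodule C).comap (genOp C g) := by
  cases g with
  | e i => exact serreSubmodule_le_comap_opE C i
  | f i => exact fun _ => opF_mem C i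
  | t i => exact serreSubmodule_le_comap_of_qCommutes C (opT_mul_opF C i)
  | tinv i => exact serreSubmodule_le_comap_of_qCommutes C ((quantumRels C).ti_mul_f i)

end WordModule

lemma mapQ_lift_apply {k V X : Type*} [CommRing k] [AddCommGroup V] [Module k V]
    (N : Submodule k V) (g : X → Module.End k V) (hg : ∀ x, N ≤ N.comap (g x))
    (a : FreeAlgebra k X) (v : V) :
    FreeAlgebra.lift k (fun x => N.mapQ N (g x) (hg x)) a (N.mkQ v) =
      N.mkQ (FreeAlgebra.lift k g a v) := by
  induction a using FreeAlgebra.induction generalizing v with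
  | grade0 r => simp only [AlgHom.commutes, Module.algebraMap_end_apply, map_smul]
  | grade1 x => simp only [FreeAlgebra.lift_ι_apply, Submodule.mkQ_apply, Submodule.mapQ_apply]
  | mul a b ha hb => simp only [map_mul, Module.End.mul_apply, ha, hb]
  | add a b ha hb => simp only [map_add, LinearMap.add_apply, ha, hb]

/-- The Verma module of `U_q(𝔤)` on whose highest weight vector `v` every `t_i` acts by `q⁻¹`. This
highest weight is chosen to have `e_i f_i^{m+1} v ≠ 0` for all `i` and `m`. -/
abbrev VermaModule (C : CartanData I) : Type := WordModule I ⧸ WordModule.serreSubmodule C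

namespace VermaModule

open WordModule

variable (C : CartanData I)

/-- The action of the free algebra on words. -/
def wordRep : FA I →ₐ[KK] Module.End KK (WordModule I) := FreeAlgebra.lift KK (genOp C)

/-- The action of the free algebra on the Verma module. -/
def freeRep : FA I →ₐ[KK] Module.End KK (VermaModule C) :=
  FreeAlgebra.lift KK fun g =>
    (serreSubmodule C).mapQ (serreSubmodule C) (genOp C g) (serreSubmodule_le_comap_genOp C g)

lemma wordRep_ge (i : I) : wordRep C (ge i) = opE C i := FreeAlgebra.lift_ι_apply _ _

lemma wordRep_gf (i : I) : wordRep C (gf i) = opF i := FreeAlgebra.lift_ι_apply _ _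

lemma wordRep_gT (i : I) : wordRep C (gT i) = opT C i := FreeAlgebra.lift_ι_apply _ _

lemma wordRep_gTinv (i : I) : wordRep C (gTinv i) = opTinv C i := FreeAlgebra.lift_ι_apply _ _

lemma freeRep_mkQ (a : FA I) (x : WordModule I) :
    freeRep C a ((serreSubmodule C).mkQ x) = (serreSubmodule C).mkQ (wordRep C a x) :=
  mapQ_lift_apply _ _ _ a x

lemma freeRep_eq_of_wordRep_eq {a b : FA I} (h : wordRep C a = wordRep C b) :
    freeRep C a = freeRep C b := by
  refine Submodule.linearMap_qext _ (LinearMap.ext fun x => ?_)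
  rw [LinearMap.comp_apply, LinearMap.comp_apply, freeRep_mkQ, freeRep_mkQ, h]

lemma freeRep_serreF {i j : I} (hij : i ≠ j) : freeRep C (serreF C i j) = 0 := by
  rw [map_serreF_eq_zero_iff hij]
  refine Submodule.linearMap_qext _ (LinearMap.ext fun x => ?_)
  have hcomp := comp_rootVec C (φ := (serreSubmodule C).mkQ) (F := opF)
    (F' := freeRep C ∘ gf) (fun k => LinearMap.ext fun y => by
      rw [LinearMap.comp_apply, LinearMap.comp_apply, Function.comp_apply, freeRep_mkQ,
        wordRep_gf]) i j (C.stringLength i j + 1)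
  rw [← hcomp, LinearMap.zero_comp, LinearMap.zero_apply, LinearMap.comp_apply,
    Submodule.mkQ_apply, Submodule.Quotient.mk_eq_zero]
  exact serreOp_mem C hij x

lemma freeRep_eq_of_qRel {a b : FA I} (h : QRel C a b) : freeRep C a = freeRep C b := by
  have R := quantumRels C
  cases h with
  | serre_f i j hij => rw [freeRep_serreF C hij, map_zero]
  | serre_e i j hij =>
    refine freeRep_eq_of_wordRep_eq C ?_
    rw [map_zero, map_serreE_eq_zero_iff (B := Module.End KK (WordModule I)) hij,
      show wordRep C ∘ ge = opE C from funext (wordRep_ge C)]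
    exact rootVec_opE_serre C hij
  | _ =>
    refine freeRep_eq_of_wordRep_eq C ?_
    simp only [map_mul, map_sub, map_one, map_smul, wordRep_ge, wordRep_gf, wordRep_gT,
      wordRep_gTinv, R.t_mul_ti, R.ti_mul_t, R.t_mul_e, R.t_mul_f, R.e_mul_f, opT_comm C,
      opT_opTinv_comm C, apply_ite (wordRep C), map_zero]

/-- The action of `U_q(𝔤)` on the Verma module. -/
def rep : Uq C →ₐ[KK] Module.End KK (VermaModule C) :=
  RingQuot.liftAlgHom KK ⟨freeRep C, fun _ _ => freeRep_eq_of_qRel C⟩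

lemma rep_uMk_mkQ (a : FA I) (x : WordModule I) :
    rep C (uMk C a) ((serreSubmodule C).mkQ x) = (serreSubmodule C).mkQ (wordRep C a x) := by
  rw [rep, uMk, RingQuot.liftAlgHom_mkAlgHom_apply, freeRep_mkQ]

end VermaModule

end VermaModule

section PowersIndependent

variable {k B : Type*} [CommRing k] [Ring B] [Algebra k B]

/-- The linear map `(a_n) ↦ ∑ a_n f^n`. -/
def powSum (f : B) : (ℕ →₀ B) →ₗ[k] B := Finsupp.lsum k fun n => LinearMap.mulRight k (f ^ n)

/-- Sums `∑ a_n f^n` with coefficients in `M` are unique. If `1 ∈ M`, this expresses that `M` and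
`k[f]` are linearly disjoint and `f` is transcendental. -/
def PowersIndependent (M : Submodule k B) (f : B) : Prop :=
  ∀ a : ℕ →₀ B, (∀ n, a n ∈ M) → powSum (k := k) f a = 0 → a = 0

lemma powSum_apply (f : B) (a : ℕ →₀ B) : powSum (k := k) f a = a.sum fun n x => x * f ^ n := rfl

lemma powSum_single (f : B) (n : ℕ) (x : B) :
    powSum (k := k) f (Finsupp.single n x) = x * f ^ n := by
  simp [powSum]

lemma toSubmodule_adjoin_singleton_eq_span (f : B) :
    Subalgebra.toSubmodule (Algebra.adjoin k {f}) =
      Submodule.span k (Set.range fun n : ℕ => f ^ n) := by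
  rw [Algebra.adjoin_eq_span, ← Submonoid.powers_eq_closure, Submonoid.coe_powers]

lemma exists_powSum_eq_of_mem_mul_adjoin {M : Submodule k B} {f x : B}
    (hx : x ∈ M * Subalgebra.toSubmodule (Algebra.adjoin k {f})) :
    ∃ a : ℕ →₀ B, (∀ n, a n ∈ M) ∧ powSum (k := k) f a = x := by
  suffices h : M * Subalgebra.toSubmodule (Algebra.adjoin k {f}) ≤
      (Finsupp.submodule fun _ => M).map (powSum (k := k) f) from h hx
  rw [toSubmodule_adjoin_singleton_eq_span, Submodule.mul_le]
  intro m hm p hp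
  suffices h : Submodule.span k (Set.range fun n : ℕ => f ^ n) ≤
      ((Finsupp.submodule fun _ => M).map (powSum (k := k) f)).comap (LinearMap.mulLeft k m) from
    h hp
  rw [Submodule.span_le]
  rintro _ ⟨n, rfl⟩
  refine ⟨Finsupp.single n m, fun l => ?_, powSum_single f n m⟩
  rw [Finsupp.single_apply]
  split_ifs
  exacts [hm, M.zero_mem]

lemma PowersIndependent.mem_of_mem_mul {M S : Submodule k B} {f x : B} (h : PowersIndependent M f)
    (hS : S ≤ M) (hxM : x ∈ M) (hx : x ∈ S * Subalgebra.toSubmodule (Algebra.adjoin k {f})) :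
    x ∈ S := by
  obtain ⟨a, ha, rfl⟩ := exists_powSum_eq_of_mem_mul_adjoin hx
  have hsub : a - Finsupp.single 0 (powSum (k := k) f a) = 0 := by
    refine h _ (fun n => ?_) (by
      rw [map_sub, powSum_single, pow_zero, mul_one, sub_self])
    rw [Finsupp.sub_apply, Finsupp.single_apply]
    refine sub_mem (hS (ha n)) ?_
    split_ifs
    exacts [hxM, M.zero_mem]
  have hzero := DFunLike.congr_fun (sub_eq_zero.mp hsub) 0
  rw [Finsupp.single_eq_same] at hzero
  exact hzero ▸ ha 0

lemma PowersIndependent.linearDisjoint {k : Type*} [Field k] [Algebra k B] {M : Submodule k B}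
    {f : B} (h : PowersIndependent M f) (h₁ : 1 ∈ M) :
    M.LinearDisjoint (Subalgebra.toSubmodule (Algebra.adjoin k {f})) := by
  obtain hB | hB := subsingleton_or_nontrivial B
  · exact .of_subsingleton_top
  let v (n : ℕ) : ↥(Subalgebra.toSubmodule (Algebra.adjoin k {f})) :=
    ⟨f ^ n, pow_mem (Algebra.self_mem_adjoin_singleton k f) n⟩
  have hv : LinearIndependent k v := by
    refine .of_comp (Submodule.subtype _) (linearIndependent_iff.mpr fun c hc => ?_)
    have hc' := h (c.mapRange (algebraMap k B) (map_zero _))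
      (fun n => by simpa [Algebra.algebraMap_eq_smul_one] using M.smul_mem _ h₁) (by
        rw [← hc, powSum_apply, Finsupp.sum_mapRange_index (by simp),
          Finsupp.linearCombination_apply]
        simp [v, Algebra.smul_def])
    exact Finsupp.mapRange_injective _ (map_zero _) (algebraMap k B).injective (by simpa using hc')
  have hspan : ⊤ ≤ Submodule.span k (Set.range v) := by
    rw [← Submodule.map_le_map_iff_of_injective (Submodule.subtype_injective _),
      Submodule.map_subtype_top, Submodule.map_span, ← Set.range_comp]
    exact (toSubmodule_adjoin_singleton_eq_span f).le
  refine .of_basis_right' _ _ (Module.Basis.mk hv hspan) ?_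
  rw [injective_iff_map_eq_zero]
  intro a ha
  have ha' := h (a.mapRange (↑) rfl) (fun n => (a n).2) (by
    rw [← ha, powSum_apply, Finsupp.sum_mapRange_index (by simp), Submodule.mulRightMap_apply]
    simp [v])
  exact Finsupp.mapRange_injective _ rfl Subtype.val_injective (by simpa using ha')

lemma apply_mul_pow_of_skewDerivation {r : B →ₗ[k] B} {f : B} {Q : k}
    (hr : ∀ x, r (x * f) = Q • (r x * f) + x) {x : B} (hx : r x = 0) (n : ℕ) :
    r (x * f ^ (n + 1)) = (∑ j ∈ Finset.range (n + 1), Q ^ j) • (x * f ^ n) := by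
  induction n with
  | zero => simp [hr, hx]
  | succ n ih =>
    rw [pow_succ f (n + 1), ← mul_assoc, hr, ih, smul_mul_assoc, mul_assoc, ← pow_succ,
      geom_sum_succ (n := n + 1), add_smul, one_smul, smul_smul]

lemma powersIndependent_ker_of_skewDerivation {k : Type*} [Field k] [Algebra k B]
    {r : B →ₗ[k] B} {f : B} {Q : k} (hr : ∀ x, r (x * f) = Q • (r x * f) + x)
    (hQ : ∀ n, ∑ j ∈ Finset.range (n + 1), Q ^ j ≠ 0) :
    PowersIndependent (LinearMap.ker r) f := by
  have key (N : ℕ) : ∀ a : ℕ → B, (∀ n, r (a n) = 0) →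
      ∑ n ∈ Finset.range N, a n * f ^ n = 0 → ∀ n < N, a n = 0 := by
    induction N with
    | zero => simp
    | succ N ih =>
      intro a ha hsum
      have hsucc : ∀ n < N, a (n + 1) = 0 := by
        refine fun n hn => (smul_eq_zero_iff_right (hQ n)).mp (ih
          (fun n => (∑ j ∈ Finset.range (n + 1), Q ^ j) • a (n + 1))
          (fun n => by rw [map_smul, ha, smul_zero]) ?_ n hn)
        rw [← map_zero r, ← hsum, Finset.sum_range_succ', pow_zero, mul_one, map_add, ha, add_zero,
          map_sum]
        exact Finset.sum_congr rfl fun n _ => by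
          rw [apply_mul_pow_of_skewDerivation hr (ha _), smul_mul_assoc]
      rw [Finset.sum_range_succ', Finset.sum_eq_zero fun n hn => by
        rw [hsucc n (Finset.mem_range.mp hn), zero_mul], zero_add, pow_zero, mul_one] at hsum
      rintro (_ | n) hn
      exacts [hsum, hsucc n (Nat.lt_of_succ_lt_succ hn)]
  intro a ha hsum
  obtain ⟨N, hN⟩ := a.support.exists_nat_subset_range
  rw [powSum_apply, Finsupp.sum_of_support_subset a hN _ (by simp)] at hsum
  ext n
  by_cases hn : n < N
  · exact key N a ha hsum n hn
  · exact Finsupp.notMem_support_iff.mp fun h => hn (Finset.mem_range.mp (hN h))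

end PowersIndependent

section TriangularDecomposition

variable (C : CartanData I)

lemma uMk_eq_of_qRel {a b : FA I} (h : QRel C a b) : uMk C a = uMk C b :=
  RingQuot.mkAlgHom_rel KK h

lemma uq_quantumRels : QuantumRels C (uE C) (uF C) (uT C) (uTinv C) where
  t_mul_ti i := by
    simpa only [uT, uTinv, map_mul, map_one] using uMk_eq_of_qRel C (QRel.t_tinv i)
  ti_mul_t i := by
    simpa only [uT, uTinv, map_mul, map_one] using uMk_eq_of_qRel C (QRel.tinv_t i)
  t_mul_e i j := by
    simpa only [uT, uE, map_mul, map_smul] using uMk_eq_of_qRel C (QRel.t_e i j)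
  t_mul_f i j := by
    simpa only [uT, uF, map_mul, map_smul] using uMk_eq_of_qRel C (QRel.t_f i j)
  e_mul_f i j := by
    simpa only [uE, uF, uT, uTinv, map_mul, map_sub, map_smul, map_zero, apply_ite (uMk C)] using
      uMk_eq_of_qRel C (QRel.e_f i j)

lemma rootVec_uF_serre {i j : I} (hij : i ≠ j) :
    rootVec C (uF C) i j (C.stringLength i j + 1) = 0 :=
  (map_serreF_eq_zero_iff hij (uMk C)).mp
    ((uMk_eq_of_qRel C (QRel.serre_f i j hij)).trans (map_zero _))

namespace VermaModule

open WordModule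

/-- The linear map sending a word `i_1 ⋯ i_n` to `f_{i_1} ⋯ f_{i_n}`. -/
def wordEval : WordModule I →ₗ[KK] Uq C :=
  Finsupp.linearCombination KK fun w => (w.map (uF C)).prod

lemma wordEval_comp_opF (k : I) :
    wordEval C ∘ₗ opF k = LinearMap.mulLeft KK (uF C k) ∘ₗ wordEval C := by
  refine Finsupp.lhom_ext fun w c => ?_
  simp [wordEval, opF_single]

lemma wordEval_serreOp {i j : I} (hij : i ≠ j) (x : WordModule I) :
    wordEval C (serreOp C i j x) = 0 := by
  have h := comp_rootVec C (φ := wordEval C) (F' := Algebra.lmul KK (Uq C) ∘ uF C)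
    (wordEval_comp_opF C) i j (C.stringLength i j + 1)
  rw [← map_rootVec, rootVec_uF_serre C hij, map_zero, LinearMap.zero_comp] at h
  exact LinearMap.congr_fun h x

lemma serreSubmodule_le_ker_wordEval : serreSubmodule C ≤ LinearMap.ker (wordEval C) :=
  sInf_le ⟨fun _ _ hij x => wordEval_serreOp C hij x, fun k y hy => by
    rw [LinearMap.mem_ker, ← LinearMap.comp_apply, wordEval_comp_opF, LinearMap.comp_apply,
      LinearMap.mem_ker.mp hy, map_zero]⟩

/-- The projection of the Verma module to `U_q^-(𝔤)`, a left inverse of the action on the highest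
weight vector. -/
def eval : VermaModule C →ₗ[KK] Uq C :=
  (serreSubmodule C).liftQ (wordEval C) (serreSubmodule_le_ker_wordEval C)

lemma eval_mkQ (x : WordModule I) : eval C ((serreSubmodule C).mkQ x) = wordEval C x :=
  Submodule.liftQ_apply _ _ x

lemma eval_rep {u : Uq C} (hu : u ∈ Uneg C) (y : VermaModule C) :
    eval C (rep C u y) = u * eval C y := by
  induction hu using Algebra.adjoin_induction generalizing y with
  | mem u hu =>
    obtain ⟨k, rfl⟩ := hu
    obtain ⟨x, rfl⟩ := (serreSubmodule C).mkQ_surjective y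
    rw [uF, rep_uMk_mkQ, eval_mkQ, eval_mkQ, wordRep_gf, ← LinearMap.comp_apply,
      wordEval_comp_opF]
    rfl
  | algebraMap r => simp [Algebra.algebraMap_eq_smul_one]
  | add a b _ _ ha hb => rw [map_add, LinearMap.add_apply, map_add, ha, hb, add_mul]
  | mul a b _ _ ha hb => rw [map_mul, Module.End.mul_apply, ha, hb, mul_assoc]

/-- The vector `f_i^m v` of the Verma module with highest weight vector `v`. -/
def powVec (i : I) (m : ℕ) : VermaModule C :=
  (serreSubmodule C).mkQ (Finsupp.single (List.replicate m i) 1)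

lemma eval_powVec_zero (i : I) : eval C (powVec C i 0) = 1 := by
  rw [powVec, eval_mkQ]
  simp [wordEval]

lemma lower_replicate_succ (i : I) (m : ℕ) :
    lower C i (List.replicate (m + 1) i) =
      ((qpow (C.d i) - qpow (-C.d i))⁻¹ * ((∑ l ∈ Finset.range (m + 1), qpow (-(2 * C.d i)) ^ l) *
        (qpow (-1) - qpow (1 + 2 * C.d i * m)))) • Finsupp.single (List.replicate m i) 1 := by
  induction m with
  | zero => simp [lower, wordPairing]
  | succ m ih =>
    have hlow : qpow (-1 - 2 * C.d i * ↑(m + 1)) = qpow (-1) * qpow (-(2 * C.d i)) ^ (m + 1) := by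
      rw [← qpow_mul_natCast, ← qpow_add]
      ring_nf
    have hhigh : qpow (1 + 2 * C.d i * m) =
        qpow (-(2 * C.d i)) * qpow (1 + 2 * C.d i * ↑(m + 1)) := by
      rw [← qpow_add]
      push_cast
      ring_nf
    rw [List.replicate_succ, lower, ih, if_pos rfl, map_smul, opF_single, ← List.replicate_succ,
      ← add_smul, wordPairing_replicate, ← mul_add]
    congr 2
    have hsum := (Finset.sum_range_succ (fun l => qpow (-(2 * C.d i)) ^ l) (m + 1)).symm.trans
      (geom_sum_succ (x := qpow (-(2 * C.d i))) (n := m + 1))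
    rw [Finset.sum_range_succ _ (m + 1), hlow, hhigh]
    linear_combination qpow (1 + 2 * C.d i * ↑(m + 1)) * hsum

lemma exists_lower_replicate_succ (i : I) (m : ℕ) :
    ∃ c : KK, c ≠ 0 ∧
      lower C i (List.replicate (m + 1) i) = c • Finsupp.single (List.replicate m i) 1 := by
  have hd := C.d_pos i
  have hm : 0 ≤ 2 * C.d i * m := by positivity
  refine ⟨_, mul_ne_zero (inv_ne_zero (qpow_sub_qpow_ne_zero ?_)) (mul_ne_zero
    (geom_sum_qpow_ne_zero ?_ m) (qpow_sub_qpow_ne_zero ?_)), lower_replicate_succ C i m⟩ <;> lia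

lemma exists_rep_powVec_succ (i : I) (m : ℕ) :
    ∃ c : KK, c ≠ 0 ∧ rep C (-(uE C i * uT C i)) (powVec C i (m + 1)) = c • powVec C i m := by
  obtain ⟨c, hc, hlower⟩ := exists_lower_replicate_succ C i m
  refine ⟨-(qpow (-1 - wordPairing C i (List.replicate (m + 1) i)) * c),
    neg_ne_zero.mpr (mul_ne_zero (qpow_ne_zero _) hc), ?_⟩
  rw [map_neg, map_mul, LinearMap.neg_apply, Module.End.mul_apply, uT, uE, powVec, rep_uMk_mkQ,
    rep_uMk_mkQ, wordRep_gT, wordRep_ge, opT_single, map_smul, opE_single, one_smul, hlower,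
    smul_smul, map_smul, neg_smul, powVec]

lemma rep_powVec_zero (i : I) : rep C (-(uE C i * uT C i)) (powVec C i 0) = 0 := by
  rw [map_neg, map_mul, LinearMap.neg_apply, Module.End.mul_apply, uT, uE, powVec, rep_uMk_mkQ,
    rep_uMk_mkQ, wordRep_gT, wordRep_ge, opT_single, map_smul, opE_single]
  simp [lower]

lemma exists_rep_pow_powVec_self (i : I) (n : ℕ) :
    ∃ c : KK, c ≠ 0 ∧ rep C ((-(uE C i * uT C i)) ^ n) (powVec C i n) = c • powVec C i 0 := by
  induction n with
  | zero => exact ⟨1, one_ne_zero, by simp⟩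
  | succ n ih =>
    obtain ⟨c, hc, h⟩ := ih
    obtain ⟨c', hc', h'⟩ := exists_rep_powVec_succ C i n
    refine ⟨c' * c, mul_ne_zero hc' hc, ?_⟩
    rw [pow_succ, map_mul, Module.End.mul_apply, h', map_smul, h, smul_smul]

lemma rep_pow_powVec_of_lt (i : I) {m n : ℕ} (hmn : m < n) :
    rep C ((-(uE C i * uT C i)) ^ n) (powVec C i m) = 0 := by
  obtain ⟨n, rfl⟩ := Nat.exists_eq_succ_of_ne_zero hmn.ne_bot
  induction m generalizing n with
  | zero => rw [pow_succ, map_mul, Module.End.mul_apply, rep_powVec_zero, map_zero]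
  | succ m ih =>
    obtain ⟨c, -, hc⟩ := exists_rep_powVec_succ C i m
    obtain ⟨n, rfl⟩ := Nat.exists_eq_succ_of_ne_zero (Nat.lt_of_succ_lt_succ hmn).ne_bot
    rw [pow_succ, map_mul, Module.End.mul_apply, hc, map_smul, ih n (by lia), smul_zero]

end VermaModule

/-- The part of the triangular decomposition of `U_q(𝔤)` that concerns `U_q^-(𝔤)` and
`T_i(f_i) = -e_i t_i`. -/
lemma powersIndependent_uneg (i : I) :
    PowersIndependent (Subalgebra.toSubmodule (Uneg C)) (-(uE C i * uT C i)) := by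
  intro a ha hsum
  ext n
  induction n using Nat.strong_induction_on with
  | _ n ih =>
    obtain ⟨c, hc, hpow⟩ := VermaModule.exists_rep_pow_powVec_self C i n
    have happ : c • VermaModule.rep C (a n) (VermaModule.powVec C i 0) = 0 := by
      rw [powSum_apply] at hsum
      have hrep := congrArg (VermaModule.rep C · (VermaModule.powVec C i n)) hsum
      simp only [Finsupp.sum, map_sum, LinearMap.sum_apply, map_zero, LinearMap.zero_apply] at hrep
      rw [← map_smul, ← hpow, ← Module.End.mul_apply, ← map_mul, ← hrep]
      refine Eq.symm (Finset.sum_eq_single n (fun l _ hl => ?_) fun hn => ?_)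
      · obtain hlt | hlt := hl.lt_or_gt
        · rw [ih l hlt, Finsupp.zero_apply, zero_mul, map_zero, LinearMap.zero_apply]
        · rw [map_mul, Module.End.mul_apply, VermaModule.rep_pow_powVec_of_lt C i hlt, map_zero]
      · rw [Finsupp.notMem_support_iff.mp hn, zero_mul, map_zero, LinearMap.zero_apply]
    rw [Finsupp.zero_apply, ← mul_one (a n), ← VermaModule.eval_powVec_zero C i,
      ← VermaModule.eval_rep C (ha n), (smul_eq_zero_iff_right hc).mp happ, map_zero]

end TriangularDecomposition

section SkewPolynomial

variable {k B : Type*} [CommRing k] [Ring B] [Algebra k B] {X : Set B} {f : B}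

lemma exists_mul_eq_mul_add_of_mem_adjoin
    (h : ∀ x ∈ X, ∃ c : k, f * x - c • (x * f) ∈ Algebra.adjoin k X) {s : B}
    (hs : s ∈ Algebra.adjoin k X) :
    ∃ u ∈ Algebra.adjoin k X, ∃ v ∈ Algebra.adjoin k X, f * s = u * f + v := by
  induction hs using Algebra.adjoin_induction with
  | mem x hx =>
    obtain ⟨c, hc⟩ := h x hx
    exact ⟨c • x, Subalgebra.smul_mem _ (Algebra.subset_adjoin hx) c, _, hc, by
      rw [smul_mul_assoc, add_sub_cancel]⟩
  | algebraMap c =>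
    exact ⟨_, algebraMap_mem _ c, 0, zero_mem _, by rw [add_zero, Algebra.commutes]⟩
  | add a b _ _ ha hb =>
    obtain ⟨u, hu, v, hv, ha⟩ := ha
    obtain ⟨u', hu', v', hv', hb⟩ := hb
    exact ⟨u + u', add_mem hu hu', v + v', add_mem hv hv', by
      rw [mul_add, ha, hb, add_mul, add_add_add_comm]⟩
  | mul a b _ hbX ha hb =>
    obtain ⟨u, hu, v, hv, ha⟩ := ha
    obtain ⟨u', hu', v', hv', hb⟩ := hb
    exact ⟨u * u', mul_mem hu hu', u * v' + v * b, add_mem (mul_mem hu hv') (mul_mem hv hbX), by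
      rw [← mul_assoc, ha, add_mul, mul_assoc, hb, mul_add, mul_assoc, add_assoc]⟩

lemma mul_mem_adjoin_mul_adjoin_singleton
    (h : ∀ x ∈ X, ∃ c : k, f * x - c • (x * f) ∈ Algebra.adjoin k X) {p : B}
    (hp : p ∈ Subalgebra.toSubmodule (Algebra.adjoin k X) *
      Subalgebra.toSubmodule (Algebra.adjoin k {f})) :
    f * p ∈ Subalgebra.toSubmodule (Algebra.adjoin k X) *
      Subalgebra.toSubmodule (Algebra.adjoin k {f}) := by
  induction hp using Submodule.mul_induction_on' with
  | mem_mul_mem s hs g hg =>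
    obtain ⟨u, hu, v, hv, hfs⟩ := exists_mul_eq_mul_add_of_mem_adjoin h hs
    rw [← mul_assoc, hfs, add_mul, mul_assoc]
    exact add_mem (Submodule.mul_mem_mul hu
      ((Algebra.adjoin k {f}).mul_mem (Algebra.self_mem_adjoin_singleton k f) hg))
      (Submodule.mul_mem_mul hv hg)
  | add p _ p' _ ih ih' => exact mul_add f p p' ▸ add_mem ih ih'

lemma adjoin_mul_adjoin_singleton
    (h : ∀ x ∈ X, ∃ c : k, f * x - c • (x * f) ∈ Algebra.adjoin k X) :
    Subalgebra.toSubmodule (Algebra.adjoin k X) * Subalgebra.toSubmodule (Algebra.adjoin k {f}) =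
      Subalgebra.toSubmodule (Algebra.adjoin k (insert f X)) := by
  set P := Subalgebra.toSubmodule (Algebra.adjoin k X) *
    Subalgebra.toSubmodule (Algebra.adjoin k {f}) with hP
  refine le_antisymm (Submodule.mul_le.mpr fun x hx g hg => ?_) fun u hu => ?_
  · exact Subalgebra.mul_mem _ (Algebra.adjoin_mono (Set.subset_insert f X) hx)
      (Algebra.adjoin_mono (Set.singleton_subset_iff.mpr (Set.mem_insert f X)) hg)
  have hone : 1 ∈ P := by
    rw [← one_mul 1]
    exact Submodule.mul_mem_mul (one_mem (Algebra.adjoin k X)) (one_mem (Algebra.adjoin k {f}))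
  suffices hmul : ∀ p ∈ P, u * p ∈ P from mul_one u ▸ hmul 1 hone
  induction hu using Algebra.adjoin_induction with
  | mem x hx =>
    obtain rfl | hx := hx
    · exact fun p => mul_mem_adjoin_mul_adjoin_singleton h
    · intro p hp
      rw [hP, ← (Algebra.adjoin k X).isIdempotentElem_toSubmodule.eq, mul_assoc]
      exact Submodule.mul_mem_mul (Algebra.subset_adjoin hx) hp
  | algebraMap c => exact fun p hp => Algebra.smul_def c p ▸ Submodule.smul_mem _ c hp
  | add a b _ _ ha hb => exact fun p hp => add_mul a b p ▸ add_mem (ha p hp) (hb p hp)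
  | mul a b _ _ ha hb => exact fun p hp => mul_assoc a b p ▸ ha _ (hb p hp)

end SkewPolynomial

section Opposite

variable {k B : Type*} [CommRing k] [Ring B] [Algebra k B]

lemma op_adjoin_eq_adjoin_image (X : Set B) :
    (Algebra.adjoin k X).op = Algebra.adjoin k (MulOpposite.op '' X) := by
  rw [Subalgebra.op_adjoin]
  exact congrArg _ (MulOpposite.opEquiv.image_eq_preimage_symm X).symm

lemma op_adjoin_range {ι : Type*} (F : ι → B) :
    (Algebra.adjoin k (Set.range F)).op =
      Algebra.adjoin k (Set.range (MulOpposite.op ∘ F)) := by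
  rw [op_adjoin_eq_adjoin_image, Set.range_comp]

lemma toSubmodule_mul_eq_of_op {S S' U : Subalgebra k B}
    (h : Subalgebra.toSubmodule S.op * Subalgebra.toSubmodule S'.op =
      Subalgebra.toSubmodule U.op) :
    Subalgebra.toSubmodule S' * Subalgebra.toSubmodule S = Subalgebra.toSubmodule U := by
  refine Submodule.comap_injective_of_surjective
    (f := (MulOpposite.opLinearEquiv k : B ≃ₗ[k] Bᵐᵒᵖ).symm.toLinearMap)
    (MulOpposite.opLinearEquiv k).symm.surjective ?_
  rw [Submodule.comap_unop_mul]
  exact h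

end Opposite

section Pairing

variable {ι : Type} (C : CartanData ι)

lemma pairB_zero (i : ι) : pairB C i 0 = 0 := by simp [pairB]

lemma pairB_single (i j : ι) (m : ℕ) :
    pairB C i (Finsupp.single j m) = C.d i * C.a i j * m := by
  simp [pairB]

lemma pairB_add (i : ι) (β γ : ι →₀ ℕ) : pairB C i (β + γ) = pairB C i β + pairB C i γ :=
  Finsupp.sum_add_index' (by simp) fun _ _ _ => by push_cast; ring

lemma rootScalar_ne_zero (i j : ι) (m : ℕ) : rootScalar C i j m ≠ 0 :=
  rootScalar_eq_qpow C i j m ▸ qpow_ne_zero _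

lemma rootScalar_eq_qpow_neg_pairB (i j : ι) (m : ℕ) :
    rootScalar C i j m = qpow (-pairB C i (Finsupp.single j 1 + Finsupp.single i m)) := by
  rw [rootScalar_eq_qpow, pairB_add, pairB_single, pairB_single, C.a_diag]
  congr 1
  push_cast
  ring

end Pairing

section Weights

variable (C : CartanData I) {B B' : Type*} [Ring B] [Algebra KK B] [Ring B'] [Algebra KK B']

/-- The span of the monomials of content `β` in a family `F`; `negWt C` is the case `F = uF C`. -/
def weightSpace (F : I → B) (β : I →₀ ℕ) : Submodule KK B :=
  Submodule.span KK {u | ∃ w : List I, (∀ j, w.count j = β j) ∧ u = (w.map F).prod}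

lemma one_mem_weightSpace_zero (F : I → B) : 1 ∈ weightSpace F 0 :=
  Submodule.subset_span ⟨[], by simp, by simp⟩

lemma mem_weightSpace_single (F : I → B) (j : I) : F j ∈ weightSpace F (Finsupp.single j 1) :=
  Submodule.subset_span ⟨[j], fun k => by
    simp [List.count_singleton, Finsupp.single_apply], by simp⟩

lemma mul_mem_weightSpace {F : I → B} {β γ : I →₀ ℕ} {u v : B} (hu : u ∈ weightSpace F β)
    (hv : v ∈ weightSpace F γ) : u * v ∈ weightSpace F (β + γ) := by
  have huv := Submodule.mul_mem_mul hu hv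
  rw [weightSpace, weightSpace, Submodule.span_mul_span] at huv
  refine Submodule.span_mono ?_ huv
  rintro _ ⟨_, ⟨w, hw, rfl⟩, _, ⟨w', hw', rfl⟩, rfl⟩
  exact ⟨w ++ w', fun j => by rw [List.count_append, hw, hw', Finsupp.add_apply], by simp⟩

lemma map_mem_weightSpace (φ : B →ₐ[KK] B') {F : I → B} {β : I →₀ ℕ} {u : B}
    (hu : u ∈ weightSpace F β) : φ u ∈ weightSpace (φ ∘ F) β := by
  suffices h : weightSpace F β ≤ (weightSpace (φ ∘ F) β).comap φ.toLinearMap from h hu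
  rw [weightSpace, Submodule.span_le]
  rintro _ ⟨w, hw, rfl⟩
  exact Submodule.subset_span ⟨w, hw, by simp [map_list_prod]⟩

lemma unop_mem_weightSpace {F : I → B} {β : I →₀ ℕ} {u : Bᵐᵒᵖ}
    (hu : u ∈ weightSpace (MulOpposite.op ∘ F) β) : u.unop ∈ weightSpace F β := by
  suffices h : weightSpace (MulOpposite.op ∘ F) β ≤
      (weightSpace F β).comap (MulOpposite.opLinearEquiv KK).symm.toLinearMap from h hu
  rw [weightSpace, Submodule.span_le]
  rintro _ ⟨w, hw, rfl⟩
  refine Submodule.subset_span ⟨w.reverse, fun j => by rw [List.count_reverse, hw], ?_⟩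
  simp [MulOpposite.unop_list_prod, List.map_reverse, Function.comp_def]

lemma rootVec_mem_weightSpace (F : I → B) (i j : I) (m : ℕ) :
    rootVec C F i j m ∈ weightSpace F (Finsupp.single j 1 + Finsupp.single i m) := by
  have hF := mem_weightSpace_single F i
  refine qComm_mem (W := fun m => weightSpace F (Finsupp.single j 1 + Finsupp.single i m))
    ?_ (fun m x hx => ?_) (fun m x hx => ?_) _ _ m
  · simpa using mem_weightSpace_single F j
  · simpa only [add_comm m, Finsupp.single_add, add_left_comm] using mul_mem_weightSpace hF hx
  · simpa only [Finsupp.single_add, add_assoc] using mul_mem_weightSpace hx hF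

end Weights

section RootVectorAlgebra

variable {ι : Type} (C : CartanData ι) {B B' : Type*} [Ring B] [Algebra KK B] [Ring B']
  [Algebra KK B'] (F : ι → B) (i : ι)

/-- The subalgebra generated by the root vectors of all `α_i`-strings through the `α_j ≠ α_i`. -/
def rootVecAlg : Subalgebra KK B :=
  Algebra.adjoin KK {x | ∃ j, i ≠ j ∧ ∃ m, rootVec C F i j m = x}

/-- The mirror image of `rootVecAlg`. -/
def rootVecAlgRight : Subalgebra KK B :=
  Algebra.adjoin KK {x | ∃ j, i ≠ j ∧ ∃ m, rootVecRight C F i j m = x}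

variable {C i} in
lemma rootVec_mem_rootVecAlg {j : ι} (hij : i ≠ j) (m : ℕ) :
    rootVec C F i j m ∈ rootVecAlg C F i :=
  Algebra.subset_adjoin ⟨j, hij, m, rfl⟩

variable {C i} in
lemma rootVecRight_mem_rootVecAlgRight {j : ι} (hij : i ≠ j) (m : ℕ) :
    rootVecRight C F i j m ∈ rootVecAlgRight C F i :=
  Algebra.subset_adjoin ⟨j, hij, m, rfl⟩

lemma op_rootVecAlgRight :
    (rootVecAlgRight C F i).op = rootVecAlg C (MulOpposite.op ∘ F) i := by
  rw [rootVecAlgRight, Subalgebra.op_adjoin]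
  congr 1
  ext x
  exact exists_congr fun j => and_congr_right fun _ => exists_congr fun m =>
    MulOpposite.unop_injective.eq_iff

lemma map_rootVecAlg (φ : B →ₐ[KK] B') :
    (rootVecAlg C F i).map φ = rootVecAlg C (φ ∘ F) i := by
  rw [rootVecAlg, AlgHom.map_adjoin]
  congr 1
  ext x
  simp [← map_rootVec]

lemma map_rootVecAlgRight (φ : B →ₐ[KK] B') :
    (rootVecAlgRight C F i).map φ = rootVecAlgRight C (φ ∘ F) i := by
  rw [rootVecAlgRight, AlgHom.map_adjoin]
  congr 1
  ext x
  simp [← map_rootVecRight]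

lemma rootVec_mem_adjoin_range (j : ι) (m : ℕ) :
    rootVec C F i j m ∈ Algebra.adjoin KK (Set.range F) := by
  have hF (j : ι) : F j ∈ Algebra.adjoin KK (Set.range F) :=
    Algebra.subset_adjoin (Set.mem_range_self j)
  exact qComm_mem (W := fun _ => Subalgebra.toSubmodule (Algebra.adjoin KK (Set.range F))) (hF j)
    (fun _ _ hx => Subalgebra.mul_mem _ (hF i) hx) (fun _ _ hx => Subalgebra.mul_mem _ hx (hF i))
    _ _ m

lemma rootVecAlg_le_adjoin_range :
    rootVecAlg C F i ≤ Algebra.adjoin KK (Set.range F) := by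
  refine Algebra.adjoin_le ?_
  rintro _ ⟨j, -, m, rfl⟩
  exact rootVec_mem_adjoin_range C F i j m

lemma rootVecAlgRight_le_adjoin_range :
    rootVecAlgRight C F i ≤ Algebra.adjoin KK (Set.range F) := by
  rw [← Subalgebra.op_le_op_iff, op_rootVecAlgRight, op_adjoin_range]
  exact rootVecAlg_le_adjoin_range C _ i

variable {F i} in
lemma adjoin_insert_eq_adjoin_range {X : Set B} (hX : ∀ j, i ≠ j → F j ∈ X)
    (hle : Algebra.adjoin KK X ≤ Algebra.adjoin KK (Set.range F)) :
    Algebra.adjoin KK (insert (F i) X) = Algebra.adjoin KK (Set.range F) := by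
  refine le_antisymm (Algebra.adjoin_le (Set.insert_subset ?_ (Algebra.adjoin_le_iff.mp hle)))
    (Algebra.adjoin_mono ?_)
  · exact Algebra.subset_adjoin (Set.mem_range_self i)
  · rintro _ ⟨j, rfl⟩
    obtain rfl | hij := eq_or_ne i j
    exacts [Set.mem_insert _ _, Set.mem_insert_of_mem _ (hX j hij)]

lemma rootVecAlg_mul_adjoin_singleton :
    Subalgebra.toSubmodule (rootVecAlg C F i) *
        Subalgebra.toSubmodule (Algebra.adjoin KK {F i}) =
      Subalgebra.toSubmodule (Algebra.adjoin KK (Set.range F)) := by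
  rw [← adjoin_insert_eq_adjoin_range ?_ (rootVecAlg_le_adjoin_range C F i),
    ← adjoin_mul_adjoin_singleton ?_, rootVecAlg]
  · rintro _ ⟨j, hij, m, rfl⟩
    exact ⟨rootScalar C i j m, rootVec_mem_rootVecAlg F hij (m + 1)⟩
  · exact fun j hij => ⟨j, hij, 0, rfl⟩

lemma rootVecAlgRight_mul_adjoin_singleton :
    Subalgebra.toSubmodule (rootVecAlgRight C F i) *
        Subalgebra.toSubmodule (Algebra.adjoin KK {F i}) =
      Subalgebra.toSubmodule (Algebra.adjoin KK (Set.range F)) := by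
  rw [← adjoin_insert_eq_adjoin_range ?_ (rootVecAlgRight_le_adjoin_range C F i),
    ← adjoin_mul_adjoin_singleton ?_, rootVecAlgRight]
  · rintro _ ⟨j, hij, m, rfl⟩
    refine ⟨(rootScalar C i j m)⁻¹, ?_⟩
    have hsucc : F i * rootVecRight C F i j m -
        (rootScalar C i j m)⁻¹ • (rootVecRight C F i j m * F i) =
          -(rootScalar C i j m)⁻¹ • rootVecRight C F i j (m + 1) := by
      rw [rootVecRight_succ, smul_sub, smul_smul, neg_mul,
        inv_mul_cancel₀ (rootScalar_ne_zero C i j m), neg_smul, neg_smul, one_smul]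
      abel
    rw [hsucc]
    exact Subalgebra.smul_mem _ (rootVecRight_mem_rootVecAlgRight F hij (m + 1)) _
  · exact fun j hij => ⟨j, hij, 0, rfl⟩

lemma adjoin_singleton_mul_rootVecAlgRight :
    Subalgebra.toSubmodule (Algebra.adjoin KK {F i}) *
        Subalgebra.toSubmodule (rootVecAlgRight C F i) =
      Subalgebra.toSubmodule (Algebra.adjoin KK (Set.range F)) := by
  have h := rootVecAlg_mul_adjoin_singleton C (MulOpposite.op ∘ F) i
  rw [Function.comp_apply, ← op_rootVecAlgRight, ← Set.image_singleton,
    ← op_adjoin_eq_adjoin_image, ← op_adjoin_range] at h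
  exact toSubmodule_mul_eq_of_op h

end RootVectorAlgebra

section SkewDerivation

variable {B : Type*} [Ring B] [Algebra KK B]

/-- A map with the defining properties of Lusztig's `r_i`, relative to a family `F`. -/
structure IsSkewDerivation (C : CartanData I) (F : I → B) (i : I) (r : B →ₗ[KK] B) : Prop where
  apply_gen : ∀ j, r (F j) = if i = j then 1 else 0
  apply_mul : ∀ (γ : I →₀ ℕ) (x y : B), y ∈ weightSpace F γ →
    r (x * y) = qpow (-pairB C i γ) • (r x * y) + x * r y

namespace IsSkewDerivation

variable {C : CartanData I} {F : I → B} {i : I} {r : B →ₗ[KK] B}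

lemma apply_one (h : IsSkewDerivation C F i r) : r 1 = 0 := by
  simpa [pairB_zero, qpow_zero] using h.apply_mul 0 1 1 (one_mem_weightSpace_zero F)

lemma apply_mul_self (h : IsSkewDerivation C F i r) (x : B) :
    r (x * F i) = qpow (-(2 * C.d i)) • (r x * F i) + x := by
  rw [h.apply_mul _ _ _ (mem_weightSpace_single F i), h.apply_gen, if_pos rfl, mul_one,
    pairB_single, C.a_diag, Nat.cast_one, mul_one, mul_comm 2]

lemma powersIndependent_ker (h : IsSkewDerivation C F i r) :
    PowersIndependent (LinearMap.ker r) (F i) :=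
  powersIndependent_ker_of_skewDerivation h.apply_mul_self fun n =>
    geom_sum_qpow_ne_zero (by have := C.d_pos i; lia) n

lemma apply_rootVec (h : IsSkewDerivation C F i r) {j : I} (hij : i ≠ j) (m : ℕ) :
    r (rootVec C F i j m) = 0 := by
  induction m with
  | zero => exact (h.apply_gen j).trans (if_neg hij)
  | succ m ih =>
    rw [rootVec_succ, map_sub, map_smul, h.apply_mul_self, ih,
      h.apply_mul _ _ _ (rootVec_mem_weightSpace C F i j m), ih, h.apply_gen, if_pos rfl,
      rootScalar_eq_qpow_neg_pairB]
    simp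

lemma rootVecAlg_le_ker (h : IsSkewDerivation C F i r) :
    Subalgebra.toSubmodule (rootVecAlg C F i) ≤ LinearMap.ker r := by
  intro s hs
  suffices hmul : ∀ x, r x = 0 → r (x * s) = 0 from by simpa using hmul 1 h.apply_one
  induction hs using Algebra.adjoin_induction with
  | mem s hs =>
    obtain ⟨j, hij, m, rfl⟩ := hs
    intro x hx
    rw [h.apply_mul _ _ _ (rootVec_mem_weightSpace C F i j m), hx, h.apply_rootVec hij]
    simp
  | algebraMap c =>
    intro x hx
    rw [← Algebra.commutes, ← Algebra.smul_def, map_smul, hx, smul_zero]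
  | add a b _ _ ha hb => exact fun x hx => by rw [mul_add, map_add, ha x hx, hb x hx, add_zero]
  | mul a b _ _ ha hb => exact fun x hx => mul_assoc x a b ▸ hb _ (ha x hx)

lemma toSubmodule_rootVecAlg (h : IsSkewDerivation C F i r)
    (hF : Algebra.adjoin KK (Set.range F) = ⊤) :
    Subalgebra.toSubmodule (rootVecAlg C F i) = LinearMap.ker r := by
  refine le_antisymm h.rootVecAlg_le_ker fun x hx => ?_
  refine h.powersIndependent_ker.mem_of_mem_mul h.rootVecAlg_le_ker hx ?_
  rw [rootVecAlg_mul_adjoin_singleton, hF]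
  exact Algebra.mem_top (R := KK)

lemma linearDisjoint_rootVecAlg (h : IsSkewDerivation C F i r)
    (hF : Algebra.adjoin KK (Set.range F) = ⊤) :
    (rootVecAlg C F i).LinearDisjoint (Algebra.adjoin KK {F i}) := by
  have hker := h.toSubmodule_rootVecAlg hF
  have hdisj := h.powersIndependent_ker.linearDisjoint (hker ▸ one_mem (rootVecAlg C F i))
  rwa [← hker] at hdisj

end IsSkewDerivation

/-- A map with the defining properties of Lusztig's `_ir`, relative to a family `F`. -/
structure IsSkewDerivationRight (C : CartanData I) (F : I → B) (i : I) (r : B →ₗ[KK] B) :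
    Prop where
  apply_gen : ∀ j, r (F j) = if i = j then 1 else 0
  apply_mul : ∀ (β : I →₀ ℕ) (x y : B), x ∈ weightSpace F β →
    r (x * y) = r x * y + qpow (-pairB C i β) • (x * r y)

namespace IsSkewDerivationRight

variable {C : CartanData I} {F : I → B} {i : I} {r : B →ₗ[KK] B}

lemma op (h : IsSkewDerivationRight C F i r) :
    IsSkewDerivation C (MulOpposite.op ∘ F) i ((MulOpposite.opLinearEquiv KK).conj r) where
  apply_gen j := MulOpposite.unop_injective <| (h.apply_gen j).trans (by split_ifs <;> rfl)
  apply_mul β x y hy := MulOpposite.unop_injective <|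
    (h.apply_mul β y.unop x.unop (unop_mem_weightSpace hy)).trans (add_comm _ _)

lemma toSubmodule_rootVecAlgRight (h : IsSkewDerivationRight C F i r)
    (hF : Algebra.adjoin KK (Set.range F) = ⊤) :
    Subalgebra.toSubmodule (rootVecAlgRight C F i) = LinearMap.ker r := by
  have hker := h.op.toSubmodule_rootVecAlg (by rw [← op_adjoin_range, hF, Subalgebra.op_top])
  rw [← op_rootVecAlgRight] at hker
  ext x
  exact (SetLike.ext_iff.mp hker (MulOpposite.op x)).trans (MulOpposite.op_eq_zero_iff (r x))

lemma linearDisjoint_rootVecAlgRight (h : IsSkewDerivationRight C F i r)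
    (hF : Algebra.adjoin KK (Set.range F) = ⊤) :
    (Algebra.adjoin KK {F i}).LinearDisjoint (rootVecAlgRight C F i) := by
  have hdisj := h.op.linearDisjoint_rootVecAlg (by rw [← op_adjoin_range, hF, Subalgebra.op_top])
  rw [← op_rootVecAlgRight, Function.comp_apply, ← Set.image_singleton,
    ← op_adjoin_eq_adjoin_image] at hdisj
  exact Submodule.LinearDisjoint.of_op hdisj

end IsSkewDerivationRight

end SkewDerivation

section NegativeHalf

variable {C : CartanData I} {i : I}

lemma coe_mem_negWt {β : I →₀ ℕ} {x : ↥(Uneg C)} (hx : x ∈ weightSpace (uFneg C) β) :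
    (x : Uq C) ∈ negWt C β := by
  have hcomp : (Uneg C).val ∘ uFneg C = uF C := rfl
  have hmap := map_mem_weightSpace (Uneg C).val hx
  rw [hcomp] at hmap
  exact hmap

variable (C) in
lemma adjoin_range_uFneg : Algebra.adjoin KK (Set.range (uFneg C)) = ⊤ := by
  refine Eq.trans ?_ (Algebra.adjoin_adjoin_coe_preimage (R := KK) (s := Set.range (uF C)))
  congr 1
  ext x
  exact exists_congr fun j => Subtype.ext_iff

variable (C i) in
lemma map_val_adjoin_uFneg :
    (Algebra.adjoin KK {uFneg C i}).map (Uneg C).val = fSub C i := by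
  rw [AlgHom.map_adjoin, Set.image_singleton]
  rfl

lemma isSkewDerivation_uFneg {r : ↥(Uneg C) →ₗ[KK] ↥(Uneg C)}
    (hr_gen : ∀ k : I, r (uFneg C k) = if i = k then 1 else 0)
    (hr_leib : ∀ (γ : I →₀ ℕ) (x y : ↥(Uneg C)), (y : Uq C) ∈ negWt C γ →
      r (x * y) = qpow (-pairB C i γ) • (r x * y) + x * r y) :
    IsSkewDerivation C (uFneg C) i r where
  apply_gen := hr_gen
  apply_mul γ x y hy := (hr_leib γ x y (coe_mem_negWt hy) :)

lemma isSkewDerivationRight_uFneg {r : ↥(Uneg C) →ₗ[KK] ↥(Uneg C)}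
    (hr_gen : ∀ k : I, r (uFneg C k) = if i = k then 1 else 0)
    (hr_leib : ∀ (β : I →₀ ℕ) (x y : ↥(Uneg C)), (x : Uq C) ∈ negWt C β →
      r (x * y) = r x * y + qpow (-pairB C i β) • (x * r y)) :
    IsSkewDerivationRight C (uFneg C) i r where
  apply_gen := hr_gen
  apply_mul β x y hx := (hr_leib β x y (coe_mem_negWt hx) :)

variable (C i) in
lemma map_val_rootVecAlg :
    (rootVecAlg C (uFneg C) i).map (Uneg C).val = rootVecAlg C (uF C) i :=
  (map_rootVecAlg C (uFneg C) i (Uneg C).val :)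

variable (C i) in
lemma map_val_rootVecAlgRight :
    (rootVecAlgRight C (uFneg C) i).map (Uneg C).val = rootVecAlgRight C (uF C) i :=
  (map_rootVecAlgRight C (uFneg C) i (Uneg C).val :)

variable {r : ↥(Uneg C) →ₗ[KK] ↥(Uneg C)}

namespace IsSkewDerivation

lemma coe_mem_rootVecAlg_iff (h : IsSkewDerivation C (uFneg C) i r) (x : ↥(Uneg C)) :
    (x : Uq C) ∈ rootVecAlg C (uF C) i ↔ r x = 0 := by
  rw [← LinearMap.mem_ker, ← h.toSubmodule_rootVecAlg (adjoin_range_uFneg C),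
    ← map_val_rootVecAlg]
  exact Subtype.val_injective.mem_set_image

lemma linearDisjoint_rootVecAlg_fSub (h : IsSkewDerivation C (uFneg C) i r) :
    (rootVecAlg C (uF C) i).LinearDisjoint (fSub C i) := by
  rw [← map_val_rootVecAlg, ← map_val_adjoin_uFneg]
  exact (h.linearDisjoint_rootVecAlg (adjoin_range_uFneg C)).map (Uneg C).val
    Subtype.val_injective

end IsSkewDerivation

namespace IsSkewDerivationRight

lemma coe_mem_rootVecAlgRight_iff (h : IsSkewDerivationRight C (uFneg C) i r) (x : ↥(Uneg C)) :
    (x : Uq C) ∈ rootVecAlgRight C (uF C) i ↔ r x = 0 := by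
  rw [← LinearMap.mem_ker, ← h.toSubmodule_rootVecAlgRight (adjoin_range_uFneg C),
    ← map_val_rootVecAlgRight]
  exact Subtype.val_injective.mem_set_image

lemma linearDisjoint_fSub_rootVecAlgRight (h : IsSkewDerivationRight C (uFneg C) i r) :
    (fSub C i).LinearDisjoint (rootVecAlgRight C (uF C) i) := by
  rw [← map_val_rootVecAlgRight, ← map_val_adjoin_uFneg]
  exact (h.linearDisjoint_rootVecAlgRight (adjoin_range_uFneg C)).map (Uneg C).val
    Subtype.val_injective

end IsSkewDerivationRight

variable (C) in
lemma mulTwo_eq_mulMap (S S' : Subalgebra KK (Uq C)) :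
    mulTwo C S S' = (Subalgebra.toSubmodule S).mulMap (Subalgebra.toSubmodule S') :=
  TensorProduct.ext' fun _ _ => rfl

variable (C) in
lemma range_mulTwo (S S' : Subalgebra KK (Uq C)) :
    LinearMap.range (mulTwo C S S') = Subalgebra.toSubmodule S * Subalgebra.toSubmodule S' := by
  rw [mulTwo_eq_mulMap, Submodule.mulMap_range]

end NegativeHalf

section BraidOperator

namespace CartanData

lemma rootScalar_mul_rootScalar {ι : Type} {C : CartanData ι} {i j : ι} (hij : i ≠ j) {m m' : ℕ}
    (hm : m + m' = C.stringLength i j) : rootScalar C i j m * rootScalar C i j m' = 1 := by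
  rw [rootScalar_eq_qpow, rootScalar_eq_qpow, ← qpow_add, neg_d_mul_a hij, ← hm, ← qpow_zero]
  congr 1
  push_cast
  ring

end CartanData

lemma rootVec_eq_zero_of_le {ι : Type} {B : Type*} [Ring B] [Algebra KK B] {C : CartanData ι}
    {F : ι → B} {i j : ι} {m n : ℕ} (h : rootVec C F i j m = 0) (hmn : m ≤ n) :
    rootVec C F i j n = 0 := by
  induction n, hmn using Nat.le_induction with
  | base => exact h
  | succ n _ ih => rw [rootVec_succ, ih, mul_zero, zero_mul, smul_zero, sub_zero]

variable {B : Type*} [Ring B] [Algebra KK B] {C : CartanData I} {E F K Ki : I → B} {i j : I}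

namespace QuantumRels

lemma ti_mul_rootVec_mul_t (h : QuantumRels C E F K Ki) (i j : I) (m : ℕ) :
    Ki i * (rootVec C F i j m * K i) = (rootScalar C i j m)⁻¹ • rootVec C F i j m := by
  rw [eq_inv_smul_iff₀ (rootScalar_ne_zero C i j m), ← mul_smul_comm, ← h.t_mul_rootVec,
    ← mul_assoc, h.ti_mul_t, one_mul]

lemma exists_lie_rootVec_mul_t (h : QuantumRels C E F K Ki) (hij : i ≠ j) {m : ℕ}
    (hm : m < C.stringLength i j) :
    ∃ c : KK, c ≠ 0 ∧
      (E i * rootVec C F i j (m + 1) - rootVec C F i j (m + 1) * E i) * K i =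
        c • rootVec C F i j m := by
  have hd := C.d_pos i
  have hq : qpow (C.d i) - qpow (-C.d i) ≠ 0 := qpow_sub_qpow_ne_zero (by lia)
  have hgeom := geom_sum_qpow_ne_zero (a := -(2 * C.d i)) (by lia) m
  have hstring : 1 - qpow (-(C.d i * C.a i j)) ^ 2 * qpow (-(2 * C.d i)) ^ m ≠ 0 := by
    rw [← qpow_mul_natCast, ← qpow_mul_natCast, ← qpow_add, CartanData.neg_d_mul_a hij]
    refine one_sub_qpow_ne_zero (ne_of_gt ?_)
    push_cast
    nlinarith
  rw [h.lie_rootVec hij, smul_mul_assoc, mul_assoc (Ki i), h.ti_mul_rootVec_mul_t, smul_smul]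
  exact ⟨_, mul_ne_zero (mul_ne_zero (mul_ne_zero (neg_ne_zero.mpr (inv_ne_zero hq)) hgeom) hstring)
    (inv_ne_zero (rootScalar_ne_zero C i j m)), rfl⟩

variable {φ : B →ₐ[KK] B}

lemma map_rootVecRight_succ (h : QuantumRels C E F K Ki) (hij : i ≠ j)
    (hi : φ (F i) = -(E i * K i)) {m m' : ℕ} (hm : m + m' = C.stringLength i j) {c : KK}
    (hc : φ (rootVecRight C F i j m) = c • rootVec C F i j m') :
    φ (rootVecRight C F i j (m + 1)) =
      c • ((E i * rootVec C F i j m' - rootVec C F i j m' * E i) * K i) := by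
  have hcancel : rootScalar C i j m • (E i * K i * rootVec C F i j m') =
      E i * rootVec C F i j m' * K i := by
    rw [mul_assoc, h.t_mul_rootVec, mul_smul_comm, smul_smul,
      CartanData.rootScalar_mul_rootScalar hij hm, one_smul, mul_assoc]
  rw [rootVecRight_succ, map_sub, map_smul, map_mul, map_mul, hc, hi, sub_mul, ← hcancel,
    mul_assoc _ (E i), smul_sub, neg_mul, mul_neg, mul_smul_comm, smul_mul_assoc, smul_neg,
    smul_comm c]
  abel

lemma exists_map_rootVecRight (h : QuantumRels C E F K Ki) (hij : i ≠ j)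
    (hi : φ (F i) = -(E i * K i))
    (hj : ∃ c : KK, c ≠ 0 ∧ φ (F j) = c • rootVec C F i j (C.stringLength i j)) {m : ℕ} :
    ∀ {m' : ℕ}, m + m' = C.stringLength i j →
      ∃ c : KK, c ≠ 0 ∧ φ (rootVecRight C F i j m) = c • rootVec C F i j m' := by
  induction m with
  | zero => exact fun hm => (zero_add _).symm.trans hm ▸ hj
  | succ m ih =>
    intro m' hm
    obtain ⟨c, hc, hφ⟩ := ih (m' := m' + 1) (by lia)
    obtain ⟨c', hc', hlie⟩ := h.exists_lie_rootVec_mul_t hij (m := m') (by lia)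
    refine ⟨c * c', mul_ne_zero hc hc', ?_⟩
    rw [h.map_rootVecRight_succ hij hi (by lia) hφ, hlie, smul_smul]

lemma map_rootVecRight_eq_zero (h : QuantumRels C E F K Ki) (hij : i ≠ j)
    (hi : φ (F i) = -(E i * K i))
    (hj : ∃ c : KK, c ≠ 0 ∧ φ (F j) = c • rootVec C F i j (C.stringLength i j)) {m : ℕ}
    (hm : C.stringLength i j < m) : φ (rootVecRight C F i j m) = 0 := by
  induction m, hm using Nat.le_induction with
  | base =>
    obtain ⟨c, -, hφ⟩ := h.exists_map_rootVecRight hij hi hj (add_zero _)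
    have hlie : E i * rootVec C F i j 0 - rootVec C F i j 0 * E i = 0 :=
      sub_eq_zero.mpr (h.e_mul_f_of_ne hij)
    rw [Nat.succ_eq_add_one, h.map_rootVecRight_succ hij hi (add_zero _) hφ, hlie, zero_mul,
      smul_zero]
  | succ m _ ih =>
    rw [rootVecRight_succ, map_sub, map_smul, map_mul, map_mul, ih, mul_zero, zero_mul,
      smul_zero, sub_zero]

/-- The braid operator carries the right root vectors along an `α_i`-string, in reverse order, to
the left ones. -/
lemma map_rootVecAlgRight_eq_rootVecAlg (h : QuantumRels C E F K Ki)
    (hserre : ∀ j, i ≠ j → rootVec C F i j (C.stringLength i j + 1) = 0)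
    (hi : φ (F i) = -(E i * K i))
    (hj : ∀ j, i ≠ j → ∃ c : KK, c ≠ 0 ∧ φ (F j) = c • rootVec C F i j (C.stringLength i j)) :
    (rootVecAlgRight C F i).map φ = rootVecAlg C F i := by
  apply le_antisymm
  · rw [rootVecAlgRight, AlgHom.map_adjoin]
    refine Algebra.adjoin_le ?_
    rintro _ ⟨_, ⟨j, hij, m, rfl⟩, rfl⟩
    obtain hm | hm := le_or_gt m (C.stringLength i j)
    · obtain ⟨c, -, hφ⟩ := h.exists_map_rootVecRight hij hi (hj j hij) (Nat.add_sub_of_le hm)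
      exact hφ ▸ Subalgebra.smul_mem _ (rootVec_mem_rootVecAlg F hij _) c
    · exact h.map_rootVecRight_eq_zero hij hi (hj j hij) hm ▸ zero_mem _
  · refine Algebra.adjoin_le ?_
    rintro _ ⟨j, hij, m, rfl⟩
    obtain hm | hm := le_or_gt m (C.stringLength i j)
    · obtain ⟨c, hc, hφ⟩ := h.exists_map_rootVecRight hij hi (hj j hij) (Nat.sub_add_cancel hm)
      rw [← inv_smul_eq_iff₀ hc |>.mpr hφ]
      exact Subalgebra.smul_mem _ (Subalgebra.mem_map.mpr
        ⟨_, rootVecRight_mem_rootVecAlgRight F hij _, rfl⟩) _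
    · exact rootVec_eq_zero_of_le (hserre j hij) hm ▸ zero_mem _

end QuantumRels

end BraidOperator

section BraidIntersection

variable {C : CartanData I} {i : I} {T : Uq C ≃ₐ[KK] Uq C}

lemma sum_uFdp_eq_smul_rootVec {j : I} (hij : i ≠ j) :
    ∑ r ∈ Finset.range ((-C.a i j).toNat + 1), ((-1 : KK) ^ r * qpow (C.d i * (r : ℤ))) •
        (uFdp C i ((-C.a i j).toNat - r) * uF C j * uFdp C i r) =
      (qfact (C.d i) (C.stringLength i j))⁻¹ • rootVec C (uF C) i j (C.stringLength i j) := by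
  rw [rootVec, CartanData.neg_d_mul_a hij]
  exact sum_divPow_eq_qComm_top (C.d_pos i) (C.stringLength i j) (uF C i) (uF C j)

lemma map_rootVecAlgRight_uF (hTfi : T (uF C i) = -(uE C i * uT C i))
    (hTf : ∀ j : I, j ≠ i → T (uF C j) =
      ∑ r ∈ Finset.range ((-C.a i j).toNat + 1), ((-1 : KK) ^ r * qpow (C.d i * (r : ℤ))) •
        (uFdp C i ((-C.a i j).toNat - r) * uF C j * uFdp C i r)) :
    (rootVecAlgRight C (uF C) i).map T.toAlgHom = rootVecAlg C (uF C) i :=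
  (uq_quantumRels C).map_rootVecAlgRight_eq_rootVecAlg (fun _ => rootVec_uF_serre C) hTfi
    fun j hij => ⟨_, inv_ne_zero (qfact_ne_zero (C.d_pos i) _),
      (hTf j hij.symm).trans (sum_uFdp_eq_smul_rootVec hij)⟩

lemma map_uneg_toSubmodule (hTfi : T (uF C i) = -(uE C i * uT C i))
    (hmap : (rootVecAlgRight C (uF C) i).map T.toAlgHom = rootVecAlg C (uF C) i) :
    Subalgebra.toSubmodule ((Uneg C).map T.toAlgHom) =
      Subalgebra.toSubmodule (rootVecAlg C (uF C) i) *
        Subalgebra.toSubmodule (Algebra.adjoin KK {-(uE C i * uT C i)}) := by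
  have hprod : Subalgebra.toSubmodule (rootVecAlgRight C (uF C) i) *
      Subalgebra.toSubmodule (fSub C i) = Subalgebra.toSubmodule (Uneg C) :=
    rootVecAlgRight_mul_adjoin_singleton C (uF C) i
  have hfi : (fSub C i).map T.toAlgHom = Algebra.adjoin KK {-(uE C i * uT C i)} := by
    rw [fSub, AlgHom.map_adjoin, Set.image_singleton, ← hTfi]
    rfl
  rw [Subalgebra.map_toSubmodule, ← hprod, Submodule.map_mul, ← hmap, ← hfi,
    Subalgebra.map_toSubmodule, Subalgebra.map_toSubmodule]

lemma usub_eq_rootVecAlg (hTfi : T (uF C i) = -(uE C i * uT C i))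
    (hmap : (rootVecAlgRight C (uF C) i).map T.toAlgHom = rootVecAlg C (uF C) i) :
    Usub C T = rootVecAlg C (uF C) i := by
  have hle : rootVecAlg C (uF C) i ≤ Uneg C := rootVecAlg_le_adjoin_range C (uF C) i
  apply le_antisymm
  · rintro x ⟨hx, hxT⟩
    refine (powersIndependent_uneg C i).mem_of_mem_mul
      (Subalgebra.toSubmodule.monotone hle) hx ?_
    rw [← map_uneg_toSubmodule hTfi hmap]
    exact hxT
  · refine le_inf hle ?_
    rw [← hmap]
    exact Subalgebra.map_mono (rootVecAlgRight_le_adjoin_range C (uF C) i)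

lemma map_subU (T : Uq C ≃ₐ[KK] Uq C) : (subU C T).map T.toAlgHom = Usub C T := by
  have hsymm : ((Uneg C).map T.symm.toAlgHom).map T.toAlgHom = Uneg C := by
    have hcomp : T.toAlgHom.comp T.symm.toAlgHom = AlgHom.id KK (Uq C) :=
      AlgHom.ext T.apply_symm_apply
    rw [Subalgebra.map_map, hcomp, Subalgebra.map_id]
  rw [subU, Algebra.map_inf _ T.injective, hsymm, inf_comm, Usub]

lemma subU_eq_rootVecAlgRight (hTfi : T (uF C i) = -(uE C i * uT C i))
    (hmap : (rootVecAlgRight C (uF C) i).map T.toAlgHom = rootVecAlg C (uF C) i) :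
    subU C T = rootVecAlgRight C (uF C) i := by
  apply Subalgebra.map_injective (f := T.toAlgHom) T.injective
  rw [map_subU, usub_eq_rootVecAlg hTfi hmap, hmap]

end BraidIntersection

/-- The multiplication map induces vector space isomorphisms
`U_i ⊗ k[f_i] ≅ U_q^-(𝔤)` and `k[f_i] ⊗ _iU ≅ U_q^-(𝔤)`, where
`U_i = U_q^-(𝔤) ∩ T_i U_q^-(𝔤)`, `_iU = U_q^-(𝔤) ∩ T_i⁻¹ U_q^-(𝔤)` and `k[f_i]` is the
subalgebra generated by `f_i`; equivalently, `U_i = Ker r_i` and `_iU = Ker (_ir)`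
(so that `U_q^-(𝔤) = ⊕_{n≥0} U_i f_i^n = ⊕_{n≥0} f_i^n (_iU)`). -/
theorem braid_intersection_tensor_decomposition
    (I : Type) [DecidableEq I] (C : CartanData I) (i : I)
    (T : Uq C ≃ₐ[KK] Uq C)
    (hTt : ∀ j : I, T (uT C j) = uT C j * tpow C i (-(C.a i j)))
    (hTei : T (uE C i) = -(uTinv C i * uF C i))
    (hTfi : T (uF C i) = -(uE C i * uT C i))
    (hTe : ∀ j : I, j ≠ i → T (uE C j) =
      ∑ r ∈ Finset.range ((-C.a i j).toNat + 1),
        ((-1 : KK) ^ r * qpow (-(C.d i * (r : ℤ)))) •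
          (uEdp C i r * uE C j * uEdp C i ((-C.a i j).toNat - r)))
    (hTf : ∀ j : I, j ≠ i → T (uF C j) =
      ∑ r ∈ Finset.range ((-C.a i j).toNat + 1),
        ((-1 : KK) ^ r * qpow (C.d i * (r : ℤ))) •
          (uFdp C i ((-C.a i j).toNat - r) * uF C j * uFdp C i r))
    (r ir : ↥(Uneg C) →ₗ[KK] ↥(Uneg C))
    (hr_gen : ∀ k : I, r (uFneg C k) = if i = k then 1 else 0)
    (hr_leib : ∀ (γ : I →₀ ℕ) (x y : ↥(Uneg C)), (y : Uq C) ∈ negWt C γ →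
        r (x * y) = qpow (-pairB C i γ) • (r x * y) + x * r y)
    (hir_gen : ∀ k : I, ir (uFneg C k) = if i = k then 1 else 0)
    (hir_leib : ∀ (β : I →₀ ℕ) (x y : ↥(Uneg C)), (x : Uq C) ∈ negWt C β →
        ir (x * y) = ir x * y + qpow (-pairB C i β) • (x * ir y)) :
    (Function.Injective (mulTwo C (Usub C T) (fSub C i)) ∧
      LinearMap.range (mulTwo C (Usub C T) (fSub C i)) =
        Subalgebra.toSubmodule (Uneg C)) ∧
    (Function.Injective (mulTwo C (fSub C i) (subU C T)) ∧
      LinearMap.range (mulTwo C (fSub C i) (subU C T)) =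
        Subalgebra.toSubmodule (Uneg C)) ∧
    (∀ (x : Uq C) (hx : x ∈ Uneg C),
      (x ∈ Usub C T ↔ r ⟨x, hx⟩ = 0) ∧ (x ∈ subU C T ↔ ir ⟨x, hx⟩ = 0)) := by
  have hmap := map_rootVecAlgRight_uF hTfi hTf
  have hr := isSkewDerivation_uFneg hr_gen hr_leib
  have hir := isSkewDerivationRight_uFneg hir_gen hir_leib
  rw [usub_eq_rootVecAlg hTfi hmap, subU_eq_rootVecAlgRight hTfi hmap]
  refine ⟨⟨?_, ?_⟩, ⟨?_, ?_⟩, fun x hx =>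
    ⟨hr.coe_mem_rootVecAlg_iff ⟨x, hx⟩, hir.coe_mem_rootVecAlgRight_iff ⟨x, hx⟩⟩⟩
  · rw [mulTwo_eq_mulMap]
    exact hr.linearDisjoint_rootVecAlg_fSub.injective
  · rw [range_mulTwo]
    exact rootVecAlg_mul_adjoin_singleton C (uF C) i
  · rw [mulTwo_eq_mulMap]
    exact hir.linearDisjoint_fSub_rootVecAlgRight.injective
  · rw [range_mulTwo]
    exact adjoin_singleton_mul_rootVecAlgRight C (uF C) i

end
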